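/- arXiv:1611.09338 — 3 statements merged into one kernel-verified Lean document; each statement's English description precedes it below -/
import Mathlib

section
/- For logarithmic averages: let s ≥ 1 and let a : ℕ → ℂ be bounded by 1 and admit correlations for logarithmic averages on a sequence of intervals I = (I_N) with |I_N| → ∞. Then ‖a‖_{U^s_{*,log}(I)} ≤ 4·‖a‖_{U^s_{log}(I)}. -/
open Filter Finset Topology

/-- Gowers uniformity norm `U^s(ℤ_L)` of the `L`-periodic sequence `n ↦ a (n % L)`. -/
noncomputable def gowersNorm (L : ℕ) : ℕ → (ℕ → ℂ) → ℝ
  | 0, _ => 0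
  | 1, a => ‖(L : ℂ)⁻¹ * ∑ m ∈ Finset.range L, a (m % L)‖
  | (s + 2), a =>
      ((L : ℝ)⁻¹ * ∑ h ∈ Finset.range L,
        gowersNorm L (s + 1)
          (fun n => a ((n + h) % L) * (starRingEnd ℂ) (a (n % L))) ^ (2 ^ (s + 1)))
        ^ (((2 : ℝ) ^ (s + 2))⁻¹)

/-- The sequence `a · 1_{[H]}` placed on residues `0,…,H-1`. -/
noncomputable def truncSeq (a : ℕ → ℂ) (H : ℕ) : ℕ → ℂ := fun n => if n < H then a (n + 1) else 0

/-- `‖a‖_{U^s[H]} = ‖a·1_{[H]}‖_{U^s(ℤ_{2H})} / ‖1_{[H]}‖_{U^s(ℤ_{2H})}`. -/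
noncomputable def UsShort (s H : ℕ) (a : ℕ → ℂ) : ℝ :=
  gowersNorm (2 * H) s (truncSeq a H) / gowersNorm (2 * H) s (truncSeq (fun _ => 1) H)

/-- `ε · h`. -/
def epsDot {s : ℕ} (ε : Fin s → Bool) (h : Fin s → ℕ) : ℕ := ∑ j, if ε j then h j else 0

/-- The Gowers cube product `∏_{ε∈{0,1}^s} C^{|ε|} a(n + ε·h)`. -/
noncomputable def cubeProd (a : ℕ → ℂ) {s : ℕ} (h : Fin s → ℕ) (n : ℕ) : ℂ :=
  ∏ ε : Fin s → Bool,
    if (Finset.univ.filter fun j => ε j = true).card % 2 = 1 then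
      (starRingEnd ℂ) (a (n + epsDot ε h))
    else a (n + epsDot ε h)

/-- Logarithmic average of `f` over the interval `I N`. -/
noncomputable def logAvg (I : ℕ → Finset ℕ) (f : ℕ → ℂ) (N : ℕ) : ℂ :=
  ((∑ n ∈ I N, (n : ℝ)⁻¹ : ℝ) : ℂ)⁻¹ * ∑ n ∈ I N, f n / (n : ℂ)


/-- conjugation according to the parity of `ε` -/
noncomputable def cjv {s : ℕ} (ε : Fin s → Bool) (z : ℂ) : ℂ :=
  if (Finset.univ.filter fun j => ε j = true).card % 2 = 1 then (starRingEnd ℂ) z else z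

lemma cjv_mul {s : ℕ} (ε : Fin s → Bool) (z w : ℂ) : cjv ε (z * w) = cjv ε z * cjv ε w := by
  unfold cjv; split_ifs <;> simp

lemma cjv_conj {s : ℕ} (ε : Fin s → Bool) (z : ℂ) :
    cjv ε ((starRingEnd ℂ) z) = (starRingEnd ℂ) (cjv ε z) := by
  unfold cjv; split_ifs <;> simp

lemma cjv_norm {s : ℕ} (ε : Fin s → Bool) (z : ℂ) : ‖cjv ε z‖ = ‖z‖ := by
  unfold cjv; split_ifs <;> simp

lemma cjv_zero {s : ℕ} (ε : Fin s → Bool) : cjv ε 0 = 0 := by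
  unfold cjv; split_ifs <;> simp

lemma cjv_one {s : ℕ} (ε : Fin s → Bool) : cjv ε 1 = 1 := by
  unfold cjv; split_ifs <;> simp

lemma cjv_cons_false {s : ℕ} (ε : Fin s → Bool) (z : ℂ) :
    cjv (Fin.cons false ε : Fin (s + 1) → Bool) z = cjv ε z := by
  unfold cjv
  rw [Fin.card_filter_univ_succ]
  simp

lemma cjv_cons_true {s : ℕ} (ε : Fin s → Bool) (z : ℂ) :
    cjv (Fin.cons true ε : Fin (s + 1) → Bool) z = (starRingEnd ℂ) (cjv ε z) := by
  unfold cjv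
  rw [Fin.card_filter_univ_succ]
  simp only [Fin.cons_zero, Fin.cons_succ, if_true]
  split_ifs with h1 h2 h2
  · omega
  · rfl
  · simp
  · omega

/-- product over the cube -/
noncomputable def cubeP {s : ℕ} (F : (Fin s → Bool) → ℂ) : ℂ := ∏ ε, cjv ε (F ε)

/-- vertex of the box spanned by two points -/
def sg {M : Type*} [AddCommMonoid M] {s : ℕ} (x x' : Fin s → M) (ε : Fin s → Bool) : M :=
  ∑ j, if ε j then x' j else x j

lemma prod_bool_succ {M : Type*} [CommMonoid M] {s : ℕ} (F : (Fin (s + 1) → Bool) → M) :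
    ∏ ε, F ε = (∏ ε : Fin s → Bool, F (Fin.cons false ε)) *
      ∏ ε : Fin s → Bool, F (Fin.cons true ε) := by
  rw [← (Fin.consEquiv (fun _ : Fin (s + 1) => Bool)).prod_comp, Fintype.prod_prod_type]
  simp [Fin.consEquiv, mul_comm]

lemma sum_bool_succ {M : Type*} [AddCommMonoid M] {s : ℕ} (F : (Fin (s + 1) → Bool) → M) :
    ∑ ε, F ε = (∑ ε : Fin s → Bool, F (Fin.cons false ε)) +
      ∑ ε : Fin s → Bool, F (Fin.cons true ε) := by
  rw [← (Fin.consEquiv (fun _ : Fin (s + 1) => Bool)).sum_comp, Fintype.sum_prod_type]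
  simp [Fin.consEquiv, add_comm]

lemma cubeP_mul {s : ℕ} (F G : (Fin s → Bool) → ℂ) :
    cubeP (fun ε => F ε * G ε) = cubeP F * cubeP G := by
  simp [cubeP, cjv_mul, Finset.prod_mul_distrib]

lemma cubeP_conj {s : ℕ} (F : (Fin s → Bool) → ℂ) :
    cubeP (fun ε => (starRingEnd ℂ) (F ε)) = (starRingEnd ℂ) (cubeP F) := by
  simp [cubeP, cjv_conj]

lemma cubeP_succ {s : ℕ} (F : (Fin (s + 1) → Bool) → ℂ) :
    cubeP F = cubeP (fun ε => F (Fin.cons false ε) * (starRingEnd ℂ) (F (Fin.cons true ε))) := by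
  rw [cubeP_mul, cubeP_conj]
  simp only [cubeP, prod_bool_succ (fun ε => cjv ε (F ε)), cjv_cons_false, cjv_cons_true, map_prod]

lemma cubeP_norm_le {s : ℕ} (F : (Fin s → Bool) → ℂ) (h : ∀ ε, ‖F ε‖ ≤ 1) : ‖cubeP F‖ ≤ 1 := by
  unfold cubeP
  rw [norm_prod]
  exact Finset.prod_le_one (fun _ _ => norm_nonneg _) (fun ε _ => by rw [cjv_norm]; exact h ε)

lemma cubeP_re_le {s : ℕ} (F : (Fin s → Bool) → ℂ) (h : ∀ ε, ‖F ε‖ ≤ 1) : |(cubeP F).re| ≤ 1 :=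
  (Complex.abs_re_le_norm _).trans (cubeP_norm_le F h)

lemma sg_cons_false {M : Type*} [AddCommMonoid M] {s : ℕ} (y y' : M) (x x' : Fin s → M)
    (ε : Fin s → Bool) :
    sg (Fin.cons y x : Fin (s + 1) → M) (Fin.cons y' x') (Fin.cons false ε) = y + sg x x' ε := by
  simp [sg, Fin.sum_univ_succ]

lemma sg_cons_true {M : Type*} [AddCommMonoid M] {s : ℕ} (y y' : M) (x x' : Fin s → M)
    (ε : Fin s → Bool) :
    sg (Fin.cons y x : Fin (s + 1) → M) (Fin.cons y' x') (Fin.cons true ε) = y' + sg x x' ε := by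
  simp [sg, Fin.sum_univ_succ]

/-- `S^s` -/
abbrev pw (s : ℕ) (S : Finset ℕ) : Finset (Fin s → ℕ) := Fintype.piFinset (fun _ : Fin s => S)

lemma sum_pw_succ {M : Type*} [AddCommMonoid M] {s : ℕ} (S : Finset ℕ)
    (φ : (Fin (s + 1) → ℕ) → M) :
    ∑ x ∈ pw (s + 1) S, φ x = ∑ y ∈ S, ∑ x ∈ pw s S, φ (Fin.cons y x) := by
  rw [← Finset.sum_product']
  symm
  refine Finset.sum_nbij' (fun p => Fin.cons p.1 p.2) (fun x => (x 0, Fin.tail x)) ?_ ?_ ?_ ?_ ?_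
  · rintro ⟨y, x⟩ h
    simp only [Finset.mem_product, Fintype.mem_piFinset] at h ⊢
    intro j
    refine Fin.cases ?_ ?_ j
    · simpa using h.1
    · intro i; simpa using h.2 i
  · intro x h
    simp only [Finset.mem_product, Fintype.mem_piFinset] at h ⊢
    exact ⟨h 0, fun i => h i.succ⟩
  · rintro ⟨y, x⟩ h; simp
  · intro x h; simp
  · rintro ⟨y, x⟩ h; rfl

/-- box sum -/
noncomputable def boxS {s : ℕ} (S : Finset ℕ) (f : (Fin s → Bool) → ℕ → ℂ) : ℂ :=
  ∑ x ∈ pw s S, ∑ x' ∈ pw s S, cubeP (fun ε => f ε (sg x x' ε))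

lemma boxS_succ {s : ℕ} (S : Finset ℕ) (f : (Fin (s + 1) → Bool) → ℕ → ℂ) :
    boxS S f = ∑ y ∈ S, ∑ y' ∈ S, boxS S (fun ε m => f (Fin.cons false ε) (y + m) *
      (starRingEnd ℂ) (f (Fin.cons true ε) (y' + m))) := by
  unfold boxS
  rw [sum_pw_succ]
  refine Finset.sum_congr rfl fun y _ => ?_
  simp only [sum_pw_succ]
  rw [Finset.sum_comm]
  refine Finset.sum_congr rfl fun y' _ => Finset.sum_congr rfl fun x _ =>
    Finset.sum_congr rfl fun x' _ => ?_
  rw [cubeP_succ]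
  simp only [sg_cons_false, sg_cons_true]

lemma sum4_comm {α β M : Type*} [AddCommMonoid M] (A : Finset α) (B : Finset β)
    (F : α → α → β → β → M) :
    ∑ y ∈ A, ∑ y' ∈ A, ∑ x ∈ B, ∑ x' ∈ B, F y y' x x' =
      ∑ x ∈ B, ∑ x' ∈ B, ∑ y ∈ A, ∑ y' ∈ A, F y y' x x' := by
  have h1 : ∀ y, ∑ y' ∈ A, ∑ x ∈ B, ∑ x' ∈ B, F y y' x x' =
      ∑ x ∈ B, ∑ x' ∈ B, ∑ y' ∈ A, F y y' x x' := by
    intro y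
    rw [Finset.sum_comm]
    exact Finset.sum_congr rfl fun x _ => Finset.sum_comm
  simp only [h1]
  rw [Finset.sum_comm]
  exact Finset.sum_congr rfl fun x _ => Finset.sum_comm

theorem gcs {s : ℕ} (S : Finset ℕ) (f : (Fin s → Bool) → ℕ → ℂ) :
    2 ^ s * (boxS S f).re ≤ ∑ ε, (boxS (s := s) S (fun _ => f ε)).re := by
  induction s with
  | zero =>
    simp only [pow_zero, one_mul, Fintype.sum_unique]
    apply le_of_eq
    congr 2
    funext ε
    exact congrArg f (Subsingleton.elim _ _)
  | succ s ih =>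
    -- the split
    have key : ∀ g0 g1 : (Fin s → Bool) → ℕ → ℂ,
        (∑ y ∈ S, ∑ y' ∈ S, boxS S (fun ε m => g0 ε (y + m) * (starRingEnd ℂ) (g1 ε (y' + m))))
          = ∑ x ∈ pw s S, ∑ x' ∈ pw s S, (∑ y ∈ S, cubeP (fun ε => g0 ε (y + sg x x' ε))) *
            (starRingEnd ℂ) (∑ y ∈ S, cubeP (fun ε => g1 ε (y + sg x x' ε))) := by
      intro g0 g1
      unfold boxS
      simp only [map_sum, Finset.sum_mul_sum]
      simp only [cubeP_mul, cubeP_conj]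
      exact sum4_comm S (pw s S) _
    have diag : ∀ g0 g1 : (Fin s → Bool) → ℕ → ℂ,
        2 * (∑ y ∈ S, ∑ y' ∈ S, boxS S
          (fun ε m => g0 ε (y + m) * (starRingEnd ℂ) (g1 ε (y' + m)))).re ≤
        (∑ y ∈ S, ∑ y' ∈ S, boxS S
          (fun ε m => g0 ε (y + m) * (starRingEnd ℂ) (g0 ε (y' + m)))).re +
        (∑ y ∈ S, ∑ y' ∈ S, boxS S
          (fun ε m => g1 ε (y + m) * (starRingEnd ℂ) (g1 ε (y' + m)))).re := by
      intro g0 g1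
      simp only [key, Complex.re_sum, Finset.mul_sum, ← Finset.sum_add_distrib]
      refine Finset.sum_le_sum fun x _ => Finset.sum_le_sum fun x' _ => ?_
      generalize ∑ y ∈ S, cubeP (fun ε => g0 ε (y + sg x x' ε)) = p
      generalize ∑ y ∈ S, cubeP (fun ε => g1 ε (y + sg x x' ε)) = q
      simp only [Complex.mul_re, Complex.conj_re, Complex.conj_im]
      nlinarith [sq_nonneg (p.re - q.re), sq_nonneg (p.im - q.im)]
    have step : ∀ g : (Fin s → Bool) → ℕ → ℂ,
        2 ^ s * (∑ y ∈ S, ∑ y' ∈ S, boxS S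
          (fun ε m => g ε (y + m) * (starRingEnd ℂ) (g ε (y' + m)))).re ≤
        ∑ ε, (∑ y ∈ S, ∑ y' ∈ S, boxS (s := s) S
          (fun _ m => g ε (y + m) * (starRingEnd ℂ) (g ε (y' + m)))).re := by
      intro g
      simp only [Complex.re_sum, Finset.mul_sum]
      rw [Finset.sum_comm (s := (Finset.univ : Finset (Fin s → Bool)))]
      refine Finset.sum_le_sum fun y _ => ?_
      rw [Finset.sum_comm (s := (Finset.univ : Finset (Fin s → Bool)))]
      refine Finset.sum_le_sum fun y' _ => ?_
      exact ih _
    rw [sum_bool_succ]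
    simp only [boxS_succ]
    have h1 := diag (fun ε => f (Fin.cons false ε)) (fun ε => f (Fin.cons true ε))
    have h2 := step (fun ε => f (Fin.cons false ε))
    have h3 := step (fun ε => f (Fin.cons true ε))
    have h4 : (0 : ℝ) < 2 ^ s := by positivity
    calc _ = 2 ^ s * (2 * (∑ y ∈ S, ∑ y' ∈ S, boxS S (fun ε m => f (Fin.cons false ε) (y + m) *
          (starRingEnd ℂ) (f (Fin.cons true ε) (y' + m)))).re) := by ring
      _ ≤ _ := mul_le_mul_of_nonneg_left h1 h4.le
      _ ≤ _ := by rw [mul_add]; exact add_le_add h2 h3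

/-- real logarithmic average -/
noncomputable def rA (I : Finset ℕ) (r : ℕ → ℝ) : ℝ :=
  (∑ n ∈ I, (n : ℝ)⁻¹)⁻¹ * ∑ n ∈ I, (n : ℝ)⁻¹ * r n

lemma rA_w_nonneg (I : Finset ℕ) : 0 ≤ (∑ n ∈ I, (n : ℝ)⁻¹) :=
  Finset.sum_nonneg fun n _ => by positivity

lemma rA_mono (I : Finset ℕ) {r t : ℕ → ℝ} (h : ∀ n, r n ≤ t n) : rA I r ≤ rA I t := by
  unfold rA
  have := rA_w_nonneg I
  gcongr with n hn
  exact h n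

lemma rA_sum {α : Type*} (I : Finset ℕ) (A : Finset α) (r : α → ℕ → ℝ) :
    rA I (fun n => ∑ i ∈ A, r i n) = ∑ i ∈ A, rA I (r i) := by
  unfold rA
  simp only [Finset.mul_sum]
  rw [Finset.sum_comm]

lemma rA_mul (I : Finset ℕ) (c : ℝ) (r : ℕ → ℝ) : rA I (fun n => c * r n) = c * rA I r := by
  unfold rA
  simp only [Finset.mul_sum]
  refine Finset.sum_congr rfl fun n _ => by ring

lemma rA_add (I : Finset ℕ) (r t : ℕ → ℝ) : rA I (fun n => r n + t n) = rA I r + rA I t := by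
  unfold rA
  simp only [mul_add, Finset.sum_add_distrib]

lemma rA_const_le (I : Finset ℕ) (c : ℝ) (hc : 0 ≤ c) : rA I (fun _ => c) ≤ c := by
  unfold rA
  rw [← Finset.sum_mul, ← mul_assoc]
  rcases eq_or_ne (∑ n ∈ I, (n : ℝ)⁻¹) 0 with h | h
  · simp [h, hc]
  · rw [inv_mul_cancel₀ h, one_mul]

lemma rA_nonneg (I : Finset ℕ) {r : ℕ → ℝ} (h : ∀ n, 0 ≤ r n) : 0 ≤ rA I r := by
  unfold rA
  have := rA_w_nonneg I
  exact mul_nonneg (inv_nonneg.2 this) (Finset.sum_nonneg fun n _ => mul_nonneg (by positivity) (h n))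

lemma rA_abs_le (I : Finset ℕ) {r : ℕ → ℝ} (h : ∀ n, |r n| ≤ 1) : |rA I r| ≤ 1 := by
  rw [abs_le]
  constructor
  · have h1 := rA_mono I (r := fun n => (-1) * r n) (t := fun _ => (1:ℝ))
      (fun n => by have := (abs_le.1 (h n)).1; linarith)
    rw [rA_mul] at h1
    have := rA_const_le I 1 zero_le_one
    linarith
  · exact (rA_mono I (fun n => (abs_le.1 (h n)).2)).trans (rA_const_le I 1 zero_le_one)

lemma rA_pow_le (I : Finset ℕ) {r : ℕ → ℝ} (h : ∀ n, 0 ≤ r n) (k : ℕ) (hk : k ≠ 0) :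
    rA I r ^ k ≤ rA I (fun n => r n ^ k) := by
  rcases eq_or_ne (∑ n ∈ I, (n : ℝ)⁻¹) 0 with h0 | h0
  · unfold rA; simp [h0, hk]
  have := Real.pow_arith_mean_le_arith_mean_pow I
    (fun n => (∑ n ∈ I, (n : ℝ)⁻¹)⁻¹ * (n : ℝ)⁻¹) r
    (fun n _ => mul_nonneg (inv_nonneg.2 (rA_w_nonneg I)) (by positivity))
    (by rw [← Finset.mul_sum, inv_mul_cancel₀ h0]) (fun n _ => h n) k
  unfold rA
  simpa only [Finset.mul_sum, mul_assoc] using this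

lemma re_logAvg (I : ℕ → Finset ℕ) (f : ℕ → ℂ) (N : ℕ) :
    (logAvg I f N).re = rA (I N) (fun n => (f n).re) := by
  unfold logAvg rA
  rw [← Complex.ofReal_inv, Complex.re_ofReal_mul, Complex.re_sum]
  congr 1
  refine Finset.sum_congr rfl fun n _ => ?_
  rw [← Complex.ofReal_natCast, Complex.div_ofReal_re]
  ring

lemma shift_bound (lo hi : ℕ) (hlo : 1 ≤ lo) (hh : lo ≤ hi + 1) (r : ℕ → ℝ) (hr : ∀ n, |r n| ≤ 1) :
    |∑ n ∈ Finset.Icc lo hi, (n : ℝ)⁻¹ * r (n + 1) - ∑ n ∈ Finset.Icc lo hi, (n : ℝ)⁻¹ * r n|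
      ≤ 2 * (lo : ℝ)⁻¹ := by
  rw [← Finset.sum_sub_distrib]
  have hIcc : Finset.Icc lo hi = Finset.Ico lo (hi + 1) := by ext; simp
  rw [hIcc]
  have e : ∀ n ∈ Finset.Ico lo (hi + 1), (n : ℝ)⁻¹ * r (n + 1) - (n : ℝ)⁻¹ * r n =
      ((((n + 1 : ℕ) : ℝ)⁻¹ * r (n + 1)) - (n : ℝ)⁻¹ * r n) +
        ((n : ℝ)⁻¹ - ((n + 1 : ℕ) : ℝ)⁻¹) * r (n + 1) := fun n _ => by ring
  rw [Finset.sum_congr rfl e, Finset.sum_add_distrib,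
    Finset.sum_Ico_sub (fun n : ℕ => (n : ℝ)⁻¹ * r n) hh]
  have b : |∑ n ∈ Finset.Ico lo (hi + 1), ((n : ℝ)⁻¹ - ((n + 1 : ℕ) : ℝ)⁻¹) * r (n + 1)| ≤
      (lo : ℝ)⁻¹ - ((hi + 1 : ℕ) : ℝ)⁻¹ := by
    refine (Finset.abs_sum_le_sum_abs _ _).trans ?_
    have : ∀ n ∈ Finset.Ico lo (hi + 1), |((n : ℝ)⁻¹ - ((n + 1 : ℕ) : ℝ)⁻¹) * r (n + 1)| ≤
        (-((n + 1 : ℕ) : ℝ)⁻¹) - (-(n : ℝ)⁻¹) := by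
      intro n hn
      have hn1 : 1 ≤ n := by simp at hn; omega
      have : ((n + 1 : ℕ) : ℝ)⁻¹ ≤ (n : ℝ)⁻¹ := by
        apply inv_anti₀
        · exact_mod_cast hn1
        · push_cast; linarith
      rw [abs_mul, abs_of_nonneg (by linarith)]
      have := mul_le_mul_of_nonneg_left (hr (n + 1)) (sub_nonneg.2 this)
      linarith
    refine (Finset.sum_le_sum this).trans ?_
    rw [Finset.sum_Ico_sub (fun n : ℕ => -(n : ℝ)⁻¹) hh]
    linarith
  have h1 : |((hi + 1 : ℕ) : ℝ)⁻¹ * r (hi + 1)| ≤ ((hi + 1 : ℕ) : ℝ)⁻¹ := by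
    rw [abs_mul, abs_of_nonneg (by positivity)]
    exact mul_le_of_le_one_right (by positivity) (hr _)
  have h2 : |(lo : ℝ)⁻¹ * r lo| ≤ (lo : ℝ)⁻¹ := by
    rw [abs_mul, abs_of_nonneg (by positivity)]
    exact mul_le_of_le_one_right (by positivity) (hr _)
  rw [abs_le] at *
  constructor <;> linarith [h1.1, h1.2, h2.1, h2.2, b.1, b.2]

lemma weight_lower (lo hi : ℕ) (hlo : 1 ≤ lo) :
    ∑ i ∈ Finset.range (hi + 1 - lo), ((i : ℝ) + 1)⁻¹ ≤ lo * ∑ n ∈ Finset.Icc lo hi, (n : ℝ)⁻¹ := by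
  have hIcc : Finset.Icc lo hi = Finset.Ico lo (hi + 1) := by ext; simp
  rw [hIcc, Finset.sum_Ico_eq_sum_range, Finset.mul_sum]
  refine Finset.sum_le_sum fun i _ => ?_
  have h1 : (1 : ℝ) ≤ lo := by exact_mod_cast hlo
  push_cast
  rw [← div_eq_mul_inv, inv_eq_one_div, div_le_div_iff₀ (by positivity) (by positivity)]
  nlinarith [Nat.cast_nonneg (α := ℝ) i]

lemma rA_shift (lo hi : ℕ → ℕ) (I : ℕ → Finset ℕ)
    (hI : ∀ N, I N = Finset.Icc (lo N) (hi N))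
    (hlo : ∀ N, 1 ≤ lo N)
    (hIcard : Tendsto (fun N => (I N).card) atTop atTop) (r : ℕ → ℝ) (hr : ∀ n, |r n| ≤ 1) :
    Tendsto (fun N => rA (I N) (fun n => r (n + 1)) - rA (I N) r) atTop (𝓝 0) := by
  have hh : Tendsto (fun n : ℕ => ∑ i ∈ Finset.range n, ((i : ℝ) + 1)⁻¹) atTop atTop := by
    simpa [one_div] using Real.tendsto_sum_range_one_div_nat_succ_atTop
  have h2 := (hh.comp hIcard).inv_tendsto_atTop.const_mul 2
  rw [mul_zero] at h2
  refine squeeze_zero_norm' ?_ h2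
  filter_upwards [hIcard.eventually_ge_atTop 1] with N hN
  have hc : (I N).card = hi N + 1 - lo N := by rw [hI]; simp
  have hle : lo N ≤ hi N := by omega
  have hb := shift_bound (lo N) (hi N) (hlo N) (by omega) r hr
  have hw := weight_lower (lo N) (hi N) (hlo N)
  simp only [Function.comp, Pi.inv_apply]
  rw [hc]
  unfold rA
  rw [hI, ← mul_sub, Real.norm_eq_abs, abs_mul]
  set W := ∑ n ∈ Finset.Icc (lo N) (hi N), (n : ℝ)⁻¹ with hW
  set h := ∑ i ∈ Finset.range (hi N + 1 - lo N), ((i : ℝ) + 1)⁻¹ with hh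
  have hpos : 0 < h := by
    apply Finset.sum_pos
    · intro i _; positivity
    · simp; omega
  have hl : (0 : ℝ) < lo N := by exact_mod_cast hlo N
  have hWp : 0 < W := by
    by_contra hcon
    nlinarith
  rw [abs_of_pos (inv_pos.2 hWp)]
  calc W⁻¹ * _ ≤ W⁻¹ * (2 * (lo N : ℝ)⁻¹) := by gcongr
    _ = 2 * (lo N * W)⁻¹ := by rw [mul_inv]; ring
    _ ≤ 2 * h⁻¹ := by gcongr

lemma rA_shift_lim (lo hi : ℕ → ℕ) (I : ℕ → Finset ℕ)
    (hI : ∀ N, I N = Finset.Icc (lo N) (hi N))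
    (hlo : ∀ N, 1 ≤ lo N)
    (hIcard : Tendsto (fun N => (I N).card) atTop atTop) (r : ℕ → ℝ) (hr : ∀ n, |r n| ≤ 1) (v : ℝ)
    (h : Tendsto (fun N => rA (I N) r) atTop (𝓝 v)) (t : ℕ) :
    Tendsto (fun N => rA (I N) (fun n => r (n + t))) atTop (𝓝 v) := by
  induction t with
  | zero => simpa using h
  | succ t ih =>
    have := (rA_shift lo hi I hI hlo hIcard (fun n => r (n + t)) (fun n => hr _)).add ih
    simp only [sub_add_cancel, zero_add] at this
    convert this using 4
    ring_nf

lemma box_shift {s : ℕ} (G : (Fin s → ℕ) → ℝ) (hG : ∀ h, |G h| ≤ 1) (H B : ℕ) (b : Fin s → ℕ)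
    (hb : ∀ i, b i ≤ B) :
    |∑ h ∈ pw s (Finset.Icc 1 H), G (h + b) - ∑ h ∈ pw s (Finset.Icc 1 H), G h| ≤
      2 * (((H : ℝ) + B) ^ s - (H : ℝ) ^ s) := by
  classical
  set A := pw s (Finset.Icc 1 H) with hA
  set A2 := pw s (Finset.Icc 1 (H + B)) with hA2
  have inj : Function.Injective (fun h : Fin s → ℕ => h + b) := add_left_injective b
  set A1 := A.image (fun h => h + b) with hA1
  have s1 : A1 ⊆ A2 := by
    intro x hx
    rw [hA1, Finset.mem_image] at hx
    obtain ⟨h, hh, rfl⟩ := hx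
    rw [hA, Fintype.mem_piFinset] at hh
    rw [hA2, Fintype.mem_piFinset]
    intro i
    have := hh i
    have := hb i
    simp only [Finset.mem_Icc, Pi.add_apply] at *
    omega
  have s0 : A ⊆ A2 := by
    intro x hx
    rw [hA, Fintype.mem_piFinset] at hx
    rw [hA2, Fintype.mem_piFinset]
    intro i
    have := hx i
    simp only [Finset.mem_Icc] at *
    omega
  have c0 : (A.card : ℝ) = (H : ℝ) ^ s := by simp [hA, pw]
  have c1 : (A1.card : ℝ) = (H : ℝ) ^ s := by
    rw [← c0, hA1, Finset.card_image_of_injective _ inj]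
  have c2 : (A2.card : ℝ) = ((H : ℝ) + B) ^ s := by simp [hA2, pw]
  have e1 : ∑ h ∈ A, G (h + b) = ∑ h ∈ A1, G h := by
    rw [hA1, Finset.sum_image (fun x _ y _ h => inj h)]
  have d : ∀ T : Finset (Fin s → ℕ), T ⊆ A2 → (T.card : ℝ) = (H : ℝ) ^ s →
      |∑ h ∈ A2, G h - ∑ h ∈ T, G h| ≤ ((H : ℝ) + B) ^ s - (H : ℝ) ^ s := by
    intro T hT hTc
    rw [← Finset.sum_sdiff hT, add_sub_cancel_right]
    refine (Finset.abs_sum_le_sum_abs _ _).trans ?_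
    refine (Finset.sum_le_sum fun x _ => hG x).trans ?_
    rw [Finset.sum_const, nsmul_eq_mul, mul_one, Finset.cast_card_sdiff hT, hTc, c2]
  rw [e1]
  have d0 := d A s0 c0
  have d1 := d A1 s1 c1
  rw [abs_le] at *
  constructor <;> linarith [d0.1, d0.2, d1.1, d1.2]

lemma sg_eq {s : ℕ} (x h : Fin s → ℕ) (ε : Fin s → Bool) :
    sg x (x + h) ε = epsDot ε h + ∑ j, x j := by
  unfold sg epsDot
  rw [← Finset.sum_add_distrib]
  refine Finset.sum_congr rfl fun j _ => ?_
  split_ifs <;> simp [add_comm]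

lemma sg_add {M : Type*} [AddCommMonoid M] {s : ℕ} (x x' y y' : Fin s → M) (ε : Fin s → Bool) :
    sg (x + y) (x' + y') ε = sg x x' ε + sg y y' ε := by
  unfold sg
  rw [← Finset.sum_add_distrib]
  refine Finset.sum_congr rfl fun j _ => ?_
  split_ifs <;> simp

/-- the main inequality before passing to the limit -/
lemma extremal_finite {s : ℕ} (v : ((Fin s → Bool) → ℕ) → ℝ) (hv : ∀ k, |v k| ≤ 1)
    (hsh : ∀ k t, v (fun ε => k ε + t) = v k) (Sg : ℕ → ℝ)
    (hS : ∀ L, Sg L = ∑ x ∈ pw s (Finset.Icc 1 L), ∑ x' ∈ pw s (Finset.Icc 1 L), v (sg x x'))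
    (hgcs : ∀ (L : ℕ) (k : (Fin s → Bool) → ℕ), ∑ x ∈ pw s (Finset.Icc 1 L), ∑ x' ∈ pw s (Finset.Icc 1 L),
      v (fun ε => k ε + sg x x' ε) ≤ Sg L) (L H : ℕ) (hLH : L ≤ H) :
    (H : ℝ) ^ s * ((H : ℝ) ^ s * Sg L - ((L : ℝ) ^ s) ^ 2 *
      (∑ h ∈ pw s (Finset.Icc 1 H), v (fun ε => epsDot ε h) +
        2 * (((H : ℝ) + (2 * L : ℕ)) ^ s - (H : ℝ) ^ s))) ≤
    (((3 * H : ℕ) : ℝ) ^ s) ^ 2 * Sg L - ((L : ℝ) ^ s) ^ 2 * (Sg (3 * H) -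
      2 * (((3 * H : ℕ) : ℝ) ^ s * (2 * ((((3 * H : ℕ) : ℝ) + L) ^ s - ((3 * H : ℕ) : ℝ) ^ s)))) := by
  classical
  have cardpw : ∀ K : ℕ, ((pw s (Finset.Icc 1 K)).card : ℝ) = (K : ℝ) ^ s := by
    intro K; simp [pw]
  set g : (Fin s → ℕ) → (Fin s → ℕ) → ℝ := fun x x' =>
    Sg L - ∑ y ∈ pw s (Finset.Icc 1 L), ∑ y' ∈ pw s (Finset.Icc 1 L), v (sg (x + y) (x' + y'))
    with hg
  have g0 : ∀ x x', 0 ≤ g x x' := by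
    intro x x'
    have := hgcs L (sg x x')
    simp only [← sg_add] at this
    exact sub_nonneg.2 this
  set M := 3 * H with hM
  -- step 1
  have h1 : ∑ x ∈ pw s (Finset.Icc 1 H), ∑ h ∈ pw s (Finset.Icc 1 H), g x (x + (h + fun _ => L)) ≤
      ∑ x ∈ pw s (Finset.Icc 1 M), ∑ x' ∈ pw s (Finset.Icc 1 M), g x x' := by
    have sub : pw s (Finset.Icc 1 H) ⊆ pw s (Finset.Icc 1 M) := by
      intro x hx
      rw [Fintype.mem_piFinset] at *
      intro i
      have := hx i
      simp only [Finset.mem_Icc] at *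
      omega
    refine le_trans ?_ (Finset.sum_le_sum_of_subset_of_nonneg sub
      (fun x _ _ => Finset.sum_nonneg fun x' _ => g0 x x'))
    refine Finset.sum_le_sum fun x hx => ?_
    have inj : Function.Injective (fun h : Fin s → ℕ => x + (h + fun _ => L)) := by
      intro h h' e
      simpa using e
    rw [← Finset.sum_image (f := fun x' => g x x') (g := fun h : Fin s → ℕ => x + (h + fun _ => L))
      (fun h _ h' _ e => inj e)]
    refine Finset.sum_le_sum_of_subset_of_nonneg ?_ (fun x' _ _ => g0 x x')
    intro z hz
    rw [Finset.mem_image] at hz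
    obtain ⟨h, hh, rfl⟩ := hz
    rw [Fintype.mem_piFinset] at *
    intro i
    have := hx i
    have := hh i
    simp only [Finset.mem_Icc, Pi.add_apply] at *
    omega
  -- step 2
  have h2 : (H : ℝ) ^ s * ((H : ℝ) ^ s * Sg L - ((L : ℝ) ^ s) ^ 2 *
      (∑ h ∈ pw s (Finset.Icc 1 H), v (fun ε => epsDot ε h) +
        2 * (((H : ℝ) + (2 * L : ℕ)) ^ s - (H : ℝ) ^ s))) ≤
      ∑ x ∈ pw s (Finset.Icc 1 H), ∑ h ∈ pw s (Finset.Icc 1 H), g x (x + (h + fun _ => L)) := by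
    rw [← cardpw H, ← nsmul_eq_mul, ← Finset.sum_const]
    refine Finset.sum_le_sum fun x _ => ?_
    simp only [hg]
    rw [Finset.sum_sub_distrib, Finset.sum_const, nsmul_eq_mul]
    apply sub_le_sub_left
    rw [Finset.sum_comm]
    simp only [Finset.sum_comm (s := pw s (Finset.Icc 1 H)) (t := pw s (Finset.Icc 1 L))]
    rw [pow_two, mul_assoc]
    conv_rhs => rw [← cardpw L, ← nsmul_eq_mul, ← nsmul_eq_mul, ← Finset.sum_const,
      ← Finset.sum_const]
    refine Finset.sum_le_sum fun y hy => ?_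
    refine Finset.sum_le_sum fun y' hy' => ?_
    rw [Fintype.mem_piFinset] at hy hy'
    have e : ∀ h : Fin s → ℕ, v (sg (x + y) (x + (h + fun _ => L) + y')) =
        v (fun ε => epsDot ε (h + fun j => L + y' j - y j)) := by
      intro h
      rw [← hsh (fun ε => epsDot ε (h + fun j => L + y' j - y j)) (∑ j, (x + y) j)]
      congr 1
      funext ε
      rw [← sg_eq]
      congr 1
      funext j
      have := hy j
      have := hy' j
      simp only [Finset.mem_Icc, Pi.add_apply] at *
      omega
    simp only [e]
    have := box_shift (fun h => v (fun ε => epsDot ε h)) (fun h => hv _) H (2 * L)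
      (fun j => L + y' j - y j) (fun j => by
        have := hy j
        have := hy' j
        simp only [Finset.mem_Icc] at *
        omega)
    rw [cardpw]
    linarith [(abs_le.1 this).2]
  -- step 3
  have h3 : ∑ x ∈ pw s (Finset.Icc 1 M), ∑ x' ∈ pw s (Finset.Icc 1 M), g x x' ≤
      ((M : ℝ) ^ s) ^ 2 * Sg L - ((L : ℝ) ^ s) ^ 2 * (Sg M -
      2 * ((M : ℝ) ^ s * (2 * (((M : ℝ) + L) ^ s - (M : ℝ) ^ s)))) := by
    simp only [hg, Finset.sum_sub_distrib, Finset.sum_const, nsmul_eq_mul, cardpw]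
    rw [pow_two ((M : ℝ) ^ s), mul_assoc]
    apply sub_le_sub_left
    rw [sum4_comm]
    rw [pow_two ((L : ℝ) ^ s), mul_assoc]
    conv_lhs => rw [← cardpw L, ← nsmul_eq_mul, ← nsmul_eq_mul, ← Finset.sum_const]
    refine Finset.sum_le_sum fun y hy => ?_
    rw [← Finset.sum_const]
    refine Finset.sum_le_sum fun y' hy' => ?_
    rw [Fintype.mem_piFinset] at hy hy'
    have t1 : ∑ x ∈ pw s (Finset.Icc 1 M), ∑ x' ∈ pw s (Finset.Icc 1 M), v (sg (x + y) x')
        - (M : ℝ) ^ s * (2 * (((M : ℝ) + L) ^ s - (M : ℝ) ^ s)) ≤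
        ∑ x ∈ pw s (Finset.Icc 1 M), ∑ x' ∈ pw s (Finset.Icc 1 M), v (sg (x + y) (x' + y')) := by
      rw [← cardpw M, ← nsmul_eq_mul, ← Finset.sum_const, ← Finset.sum_sub_distrib]
      refine Finset.sum_le_sum fun x _ => ?_
      have := box_shift (fun x' => v (sg (x + y) x')) (fun h => hv _) M L y'
        (fun j => (Finset.mem_Icc.1 (hy' j)).2)
      rw [cardpw]
      linarith [(abs_le.1 this).1]
    have t2 : ∑ x ∈ pw s (Finset.Icc 1 M), ∑ x' ∈ pw s (Finset.Icc 1 M), v (sg x x')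
        - (M : ℝ) ^ s * (2 * (((M : ℝ) + L) ^ s - (M : ℝ) ^ s)) ≤
        ∑ x ∈ pw s (Finset.Icc 1 M), ∑ x' ∈ pw s (Finset.Icc 1 M), v (sg (x + y) x') := by
      rw [Finset.sum_comm, Finset.sum_comm (f := fun x x' => v (sg (x + y) x'))]
      rw [← cardpw M, ← nsmul_eq_mul, ← Finset.sum_const, ← Finset.sum_sub_distrib]
      refine Finset.sum_le_sum fun x' _ => ?_
      have := box_shift (fun x => v (sg x x')) (fun h => hv _) M L y
        (fun j => (Finset.mem_Icc.1 (hy j)).2)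
      rw [cardpw]
      linarith [(abs_le.1 this).1]
    rw [hS M]
    linarith
  exact h2.trans (h1.trans h3)

lemma extremal {s : ℕ} (v : ((Fin s → Bool) → ℕ) → ℝ) (hv : ∀ k, |v k| ≤ 1)
    (hsh : ∀ k t, v (fun ε => k ε + t) = v k) (Sg : ℕ → ℝ)
    (hS : ∀ L, Sg L = ∑ x ∈ pw s (Finset.Icc 1 L), ∑ x' ∈ pw s (Finset.Icc 1 L), v (sg x x'))
    (hgcs : ∀ (L : ℕ) (k : (Fin s → Bool) → ℕ), ∑ x ∈ pw s (Finset.Icc 1 L), ∑ x' ∈ pw s (Finset.Icc 1 L),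
      v (fun ε => k ε + sg x x' ε) ≤ Sg L) (U : ℝ)
    (hlim : Tendsto (fun H : ℕ => ((H : ℝ) ^ s)⁻¹ * ∑ h ∈ pw s (Finset.Icc 1 H),
      v (fun ε => epsDot ε h)) atTop (𝓝 U)) (δ : ℝ) (hδ : 0 < δ) :
    ∃ L : ℕ, 1 ≤ L ∧ Sg L ≤ ((L : ℝ) ^ s) ^ 2 * (U + δ) := by
  set φ : ℕ → ℝ := fun L => Sg L / ((L : ℝ) ^ s) ^ 2 with hφ
  have cardpw : ∀ K : ℕ, ((pw s (Finset.Icc 1 K)).card : ℝ) = (K : ℝ) ^ s := by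
    intro K; simp [pw]
  have hlow : ∀ L : ℕ, 1 ≤ L → -1 ≤ φ L := by
    intro L hL
    have : (0 : ℝ) < L := by exact_mod_cast hL
    rw [hφ]
    simp only
    rw [le_div_iff₀ (by positivity), hS, pow_two, neg_one_mul, ← mul_neg]
    conv_lhs => rw [← cardpw L, ← nsmul_eq_mul, ← Finset.sum_const]
    refine Finset.sum_le_sum fun x _ => ?_
    rw [← mul_neg_one, ← nsmul_eq_mul, ← Finset.sum_const]
    exact Finset.sum_le_sum fun x' _ => (abs_le.1 (hv _)).1
  set T : Set ℝ := φ '' {L | 1 ≤ L} with hT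
  have hbdd : BddBelow T := ⟨-1, by rintro _ ⟨L, hL, rfl⟩; exact hlow L hL⟩
  have hne : T.Nonempty := ⟨φ 1, 1, le_refl (1 : ℕ), rfl⟩
  obtain ⟨_, ⟨L, hL, rfl⟩, hlt⟩ := exists_lt_of_csInf_lt hne
    (show sInf T < sInf T + δ / 9 ^ s from lt_add_of_pos_right _ (by positivity))
  have hL' : (0 : ℝ) < L := by exact_mod_cast (show 0 < L from hL)
  refine ⟨L, hL, ?_⟩
  have main : ∀ H : ℕ, L ≤ H →
      φ L - (((H : ℝ) ^ s)⁻¹ * ∑ h ∈ pw s (Finset.Icc 1 H), v (fun ε => epsDot ε h))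
        - 2 * ((1 + 2 * L / (H : ℝ)) ^ s - 1) ≤
      9 ^ s * (φ L - sInf T + 4 * ((1 + (L : ℝ) / 3 / H) ^ s - 1)) := by
    intro H hH
    have hHp : (0 : ℝ) < H := hL'.trans_le (by exact_mod_cast hH)
    have hi : sInf T ≤ φ (3 * H) := csInf_le hbdd ⟨3 * H, by
      have : 1 ≤ L := hL
      simp only [Set.mem_ofPred_eq]; omega, rfl⟩
    have := extremal_finite v hv hsh Sg hS hgcs L H hH
    have e1 : Sg L = φ L * ((L : ℝ) ^ s) ^ 2 := by
      simp only [hφ]; field_simp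
    have e2 : Sg (3 * H) = φ (3 * H) * (((3 * H : ℕ) : ℝ) ^ s) ^ 2 := by
      simp only [hφ]; push_cast; field_simp
    have e3 : ((H : ℝ) + (2 * L : ℕ)) ^ s = (1 + 2 * L / (H : ℝ)) ^ s * (H : ℝ) ^ s := by
      rw [← mul_pow]; congr 1; push_cast; field_simp
    have e4 : (((3 * H : ℕ) : ℝ) + L) ^ s = (1 + (L : ℝ) / 3 / H) ^ s * (3 ^ s * (H : ℝ) ^ s) := by
      rw [← mul_pow, ← mul_pow]; congr 1; push_cast; field_simp
    have e5 : ((3 * H : ℕ) : ℝ) ^ s = 3 ^ s * (H : ℝ) ^ s := by push_cast; rw [mul_pow]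
    have e6 : (9 : ℝ) ^ s = 3 ^ s * 3 ^ s := by rw [← mul_pow]; norm_num
    have e7 : ∑ h ∈ pw s (Finset.Icc 1 H), v (fun ε => epsDot ε h) =
      (H : ℝ) ^ s * (((H : ℝ) ^ s)⁻¹ * ∑ h ∈ pw s (Finset.Icc 1 H), v (fun ε => epsDot ε h)) := by
      field_simp
    rw [e1, e2, e3, e4, e5, e7] at this
    rw [e6]
    generalize (((H : ℝ) ^ s)⁻¹ * ∑ h ∈ pw s (Finset.Icc 1 H), v (fun ε => epsDot ε h)) = C at *
    generalize (1 + 2 * L / (H : ℝ)) ^ s = E1 at *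
    generalize (1 + (L : ℝ) / 3 / H) ^ s = E2 at *
    have hp1 : (0 : ℝ) < (H : ℝ) ^ s := by positivity
    have hp2 : (0 : ℝ) < (L : ℝ) ^ s := by positivity
    have hp3 : (0 : ℝ) < (3 : ℝ) ^ s := by positivity
    generalize (H : ℝ) ^ s = h at *
    generalize (L : ℝ) ^ s = l at *
    generalize (3 : ℝ) ^ s = t at *
    have h5 : φ L - C - 2 * (E1 - 1) ≤ t * t * (φ L - φ (3 * H) + 4 * (E2 - 1)) := by
      have hq : 0 < h ^ 2 * l ^ 2 := by positivity
      refine le_of_mul_le_mul_left ?_ hq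
      nlinarith [this]
    refine h5.trans ?_
    have : 0 ≤ t * t := by positivity
    gcongr
  have lim0 : ∀ c : ℝ, Tendsto (fun H : ℕ => (1 + c / (H : ℝ)) ^ s - 1) atTop (𝓝 0) := by
    intro c
    have := (((tendsto_const_div_atTop_nhds_zero_nat c).const_add 1).pow s).sub_const 1
    simpa using this
  have l1 : Tendsto (fun H : ℕ =>
      φ L - (((H : ℝ) ^ s)⁻¹ * ∑ h ∈ pw s (Finset.Icc 1 H), v (fun ε => epsDot ε h))
        - 2 * ((1 + 2 * L / (H : ℝ)) ^ s - 1)) atTop (𝓝 (φ L - U - 2 * 0)) :=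
    (hlim.const_sub _).sub ((lim0 _).const_mul 2)
  have l2 : Tendsto (fun H : ℕ =>
      9 ^ s * (φ L - sInf T + 4 * ((1 + (L : ℝ) / 3 / H) ^ s - 1))) atTop
      (𝓝 (9 ^ s * (φ L - sInf T + 4 * 0))) :=
    (((lim0 _).const_mul 4).const_add _).const_mul _
  have l3 := le_of_tendsto_of_tendsto l1 l2 (by
    filter_upwards [eventually_ge_atTop L] with H hH using main H hH)
  have l4 : (9 : ℝ) ^ s * (φ L - sInf T + 4 * 0) ≤ δ := by
    have : φ L - sInf T + 4 * 0 ≤ δ / 9 ^ s := by linarith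
    calc _ ≤ (9 : ℝ) ^ s * (δ / 9 ^ s) := by gcongr
      _ = δ := by field_simp
  have l5 : φ L ≤ U + δ := by linarith
  simp only [hφ] at l5
  rw [div_le_iff₀ (by positivity)] at l5
  linarith

/-- unnormalized Gowers sum on `ZMod D` -/
noncomputable def cubeG {D : ℕ} [NeZero D] (s : ℕ) (g : ZMod D → ℂ) : ℂ :=
  ∑ m : ZMod D, ∑ h : Fin s → ZMod D, cubeP (fun ε => g (m + sg 0 h ε))

lemma cubeG_succ {D : ℕ} [NeZero D] (s : ℕ) (g : ZMod D → ℂ) :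
    cubeG (s + 1) g = ∑ k : ZMod D, cubeG s (fun z => g z * (starRingEnd ℂ) (g (z + k))) := by
  unfold cubeG
  conv_rhs => rw [Finset.sum_comm]
  refine Finset.sum_congr rfl fun m _ => ?_
  rw [← (Fin.consEquiv (fun _ : Fin (s + 1) => ZMod D)).sum_comp, Fintype.sum_prod_type]
  refine Finset.sum_congr rfl fun k _ => Finset.sum_congr rfl fun h _ => ?_
  rw [cubeP_succ]
  congr 1
  funext ε
  have e0 : (0 : Fin (s + 1) → ZMod D) = Fin.cons 0 0 := by
    funext j; refine Fin.cases ?_ ?_ j <;> simp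
  simp only [Fin.consEquiv, Equiv.coe_fn_mk, e0, sg_cons_false, sg_cons_true, zero_add]
  congr 3
  abel

lemma cubeG_conj {D : ℕ} [NeZero D] (s : ℕ) (g : ZMod D → ℂ) :
    cubeG s (fun z => (starRingEnd ℂ) (g z)) = (starRingEnd ℂ) (cubeG s g) := by
  unfold cubeG
  simp only [map_sum, ← cubeP_conj]

lemma sum_range_zmod {D : ℕ} [NeZero D] {M : Type*} [AddCommMonoid M] (φ : ZMod D → M) :
    ∑ h ∈ Finset.range D, φ (h : ZMod D) = ∑ z : ZMod D, φ z := by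
  refine Finset.sum_nbij' (fun h => (h : ZMod D)) (fun z => z.val) ?_ ?_ ?_ ?_ ?_
  · simp
  · intro z _; simpa using ZMod.val_lt z
  · intro h hh; exact ZMod.val_cast_of_lt (Finset.mem_range.1 hh)
  · intro z _; simp
  · simp

lemma gowersNorm_nonneg (D s : ℕ) (f : ℕ → ℂ) : 0 ≤ gowersNorm D s f := by
  induction s generalizing f with
  | zero => simp [gowersNorm]
  | succ s ih =>
    cases s with
    | zero => simp only [gowersNorm]; positivity
    | succ s =>
      simp only [gowersNorm]
      apply Real.rpow_nonneg
      refine mul_nonneg (by positivity) (Finset.sum_nonneg fun h _ => pow_nonneg (ih _) _)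

lemma gowersNorm_pow {D : ℕ} [NeZero D] (s : ℕ) (f : ℕ → ℂ) :
    gowersNorm D (s + 1) f ^ 2 ^ (s + 1) =
      (cubeG (D := D) (s + 1) (fun z => f z.val)).re / (D : ℝ) ^ (s + 2) := by
  have hD : (D : ℝ) ≠ 0 := by exact_mod_cast NeZero.ne D
  induction s generalizing f with
  | zero =>
    simp only [gowersNorm, zero_add, pow_one]
    have e1 : ∑ m ∈ Finset.range D, f (m % D) = ∑ z : ZMod D, f z.val := by
      rw [← sum_range_zmod]
      refine Finset.sum_congr rfl fun m _ => ?_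
      rw [ZMod.val_natCast]
    rw [e1]
    have e2 : cubeG (D := D) 1 (fun z => f z.val) =
        (∑ z : ZMod D, f z.val) * (starRingEnd ℂ) (∑ z : ZMod D, f z.val) := by
      rw [cubeG_succ, map_sum, Finset.sum_mul_sum]
      unfold cubeG
      rw [Finset.sum_comm]
      refine Finset.sum_congr rfl fun m _ => ?_
      rw [← Equiv.sum_comp (Equiv.addLeft m) (fun k : ZMod D => f m.val * (starRingEnd ℂ) (f k.val))]
      refine Finset.sum_congr rfl fun k _ => ?_
      simp [cubeP, cjv, sg]
    rw [e2, Complex.mul_conj, Complex.ofReal_re, norm_mul, mul_pow, Complex.normSq_eq_norm_sq,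
      norm_inv, Complex.norm_natCast]
    field_simp
  | succ s ih =>
    rw [show s + 1 + 1 = s + 2 from rfl]
    simp only [gowersNorm]
    rw [← Real.rpow_natCast, ← Real.rpow_mul]
    · have : (((2 : ℝ) ^ (s + 2))⁻¹ * ((2 ^ (s + 2) : ℕ) : ℝ)) = 1 := by
        push_cast
        exact inv_mul_cancel₀ (by positivity)
      rw [this, Real.rpow_one]
      simp only [ih]
      have e : ∀ h : ℕ, (fun z : ZMod D => f ((z.val + h) % D) * (starRingEnd ℂ) (f (z.val % D))) =
          fun z : ZMod D => (starRingEnd ℂ)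
            (f z.val * (starRingEnd ℂ) (f (z + (h : ZMod D)).val)) := by
        intro h
        funext z
        rw [ZMod.val_add, ZMod.val_natCast, Nat.add_mod_mod, Nat.mod_eq_of_lt (ZMod.val_lt z),
          map_mul, Complex.conj_conj, mul_comm]
      simp only [e, cubeG_conj, Complex.conj_re]
      rw [sum_range_zmod (fun h : ZMod D => (cubeG (s + 1)
        (fun z : ZMod D => f z.val * (starRingEnd ℂ) (f (z + h).val))).re / (D : ℝ) ^ (s + 2)),
        cubeG_succ, Complex.re_sum, ← Finset.sum_div]
      field_simp
      ring
    · exact mul_nonneg (by positivity) (Finset.sum_nonneg fun h _ => pow_nonneg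
        (gowersNorm_nonneg _ _ _) _)

lemma sg_cast {D s : ℕ} (y y' : Fin s → ℕ) (ε : Fin s → Bool) :
    ((sg y y' ε : ℕ) : ZMod D) = sg (fun j => (y j : ZMod D)) (fun j => (y' j : ZMod D)) ε := by
  unfold sg
  push_cast
  rfl

lemma cubeG_translate {D : ℕ} [NeZero D] {s : ℕ} (g : ZMod D → ℂ) (y y' : Fin s → ℕ) :
    cubeG s g = ∑ m : ZMod D, ∑ h : Fin s → ZMod D,
      cubeP (fun ε => g (m + sg 0 h ε + (sg y y' ε : ℕ))) := by
  unfold cubeG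
  set Y : Fin s → ZMod D := fun j => (y j : ZMod D) with hY
  set Y' : Fin s → ZMod D := fun j => (y' j : ZMod D) with hY'
  rw [← Equiv.sum_comp (Equiv.addRight (∑ j, Y j))]
  refine Finset.sum_congr rfl fun m _ => ?_
  rw [← Equiv.sum_comp (Equiv.addRight (Y' - Y))]
  refine Finset.sum_congr rfl fun h _ => ?_
  congr 1
  funext ε
  congr 1
  rw [sg_cast, ← hY, ← hY']
  simp only [Equiv.coe_addRight]
  rw [add_assoc, add_assoc]
  congr 1
  unfold sg
  rw [← Finset.sum_add_distrib, ← Finset.sum_add_distrib]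
  refine Finset.sum_congr rfl fun j _ => ?_
  split_ifs
  · simp only [Pi.add_apply, Pi.sub_apply]; ring
  · simp only [Pi.zero_apply]; ring

lemma sg_le {s : ℕ} (L : ℕ) (y y' : Fin s → ℕ) (hy : y ∈ pw s (Finset.Icc 1 L))
    (hy' : y' ∈ pw s (Finset.Icc 1 L)) (ε : Fin s → Bool) : sg y y' ε ≤ s * L := by
  unfold sg
  rw [Fintype.mem_piFinset] at hy hy'
  calc _ ≤ ∑ _j : Fin s, L := Finset.sum_le_sum fun j _ => by
        have := (Finset.mem_Icc.1 (hy j)).2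
        have := (Finset.mem_Icc.1 (hy' j)).2
        split_ifs <;> assumption
    _ = s * L := by simp

lemma val_add_cast {D : ℕ} [NeZero D] (z : ZMod D) (c : ℕ) (h : z.val + c < D) :
    (z + (c : ZMod D)).val = z.val + c := by
  rw [ZMod.val_add, ZMod.val_natCast, Nat.add_mod_mod, Nat.mod_eq_of_lt h]

/-- residues too close to a boundary -/
def nearB {D : ℕ} (H K : ℕ) (z : ZMod D) : Prop :=
  (z.val < H ∧ H ≤ z.val + K) ∨ D ≤ z.val + K

open Classical in
/-- inner cubes -/
noncomputable def setA (D s H K : ℕ) [NeZero D] : Finset (ZMod D × (Fin s → ZMod D)) :=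
  Finset.univ.filter fun p => ∀ ε, (p.1 + sg 0 p.2 ε).val + K < H

open Classical in
/-- boundary cubes -/
noncomputable def setC (D s H K : ℕ) [NeZero D] : Finset (ZMod D × (Fin s → ZMod D)) :=
  Finset.univ.filter fun p => ∃ ε, nearB H K (p.1 + sg 0 p.2 ε)

lemma nearB_card {D : ℕ} [NeZero D] (H K : ℕ) [DecidablePred (nearB (D := D) H K)] :
    (Finset.univ.filter fun z : ZMod D => nearB H K z).card ≤ 2 * K := by
  classical
  have : (Finset.univ.filter fun z : ZMod D => nearB H K z).card ≤
      (Finset.Ico (H - K) H ∪ Finset.Ico (D - K) D).card := by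
    apply Finset.card_le_card_of_injOn (fun z => z.val)
    · intro z hz
      have hz' : nearB H K z := by simpa using hz
      have := ZMod.val_lt z
      simp only [Finset.coe_union, Finset.coe_Ico, Set.mem_union, Set.mem_Ico]
      rcases hz' with h | h
      · left; omega
      · right; omega
    · intro z _ w _ h
      exact ZMod.val_injective D h
  refine this.trans ((Finset.card_union_le _ _).trans ?_)
  simp only [Nat.card_Ico]
  omega

lemma setC_card (D s H K : ℕ) [NeZero D] : (setC D s H K).card ≤ 2 ^ s * (D ^ s * (2 * K)) := by
  classical
  have sub : setC D s H K ⊆ Finset.univ.biUnion (fun ε : Fin s → Bool =>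
      Finset.univ.filter fun p : ZMod D × (Fin s → ZMod D) => nearB H K (p.1 + sg 0 p.2 ε)) := by
    intro p hp
    simpa [setC] using hp
  refine (Finset.card_le_card sub).trans (Finset.card_biUnion_le.trans ?_)
  have : ∀ ε : Fin s → Bool, (Finset.univ.filter fun p : ZMod D × (Fin s → ZMod D) =>
      nearB H K (p.1 + sg 0 p.2 ε)).card ≤ D ^ s * (2 * K) := by
    intro ε
    rw [Finset.card_filter, Fintype.sum_prod_type, Finset.sum_comm]
    calc _ ≤ ∑ _h : Fin s → ZMod D, 2 * K := by
          refine Finset.sum_le_sum fun h _ => ?_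
          have := Equiv.sum_comp (Equiv.addRight (sg 0 h ε))
            (fun z : ZMod D => if nearB H K z then 1 else 0)
          simp only [Equiv.coe_addRight] at this
          refine (le_of_eq ?_).trans (nearB_card (D := D) H K)
          rw [Finset.card_filter, ← this]
          rfl
      _ = _ := by simp [ZMod.card]
  calc _ ≤ ∑ _ε : Fin s → Bool, D ^ s * (2 * K) := Finset.sum_le_sum fun ε _ => this ε
    _ = _ := by simp

lemma cubeG_one (D s H : ℕ) [NeZero D] :
    (cubeG (D := D) s (fun z => truncSeq (fun _ => 1) H z.val)).re = ((setA D s H 0).card : ℝ) := by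
  classical
  unfold cubeG
  rw [← Fintype.sum_prod_type' (f := fun (m : ZMod D) (h : Fin s → ZMod D) =>
    cubeP (fun ε => truncSeq (fun _ => 1) H (m + sg 0 h ε).val)), Complex.re_sum, setA,
    Finset.card_filter]
  push_cast
  refine Finset.sum_congr rfl fun p _ => ?_
  unfold cubeP truncSeq
  split_ifs with h
  · have : ∀ ε : Fin s → Bool, cjv ε (if (p.1 + sg 0 p.2 ε).val < H then (1 : ℂ) else 0) = 1 := by
      intro ε
      rw [if_pos (by simpa using h ε), cjv_one]
    simp [this]
  · push Not at h
    obtain ⟨ε, hε⟩ := h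
    rw [Finset.prod_eq_zero (Finset.mem_univ ε)]
    · simp
    · simp only
      rw [if_neg (by omega), cjv_zero]

lemma setA_lower (D s H : ℕ) [NeZero D] (hD : D = 2 * H) :
    (H / (s + 1)) ^ (s + 1) ≤ (setA D s H 0).card := by
  classical
  set r := H / (s + 1) with hr
  have hrH : (s + 1) * r ≤ H := Nat.mul_div_le H (s + 1)
  have hH0 : 0 < H := by have := NeZero.ne D; omega
  set Q : Finset (ZMod D) := (Finset.range r).image (fun k : ℕ => (k : ZMod D)) with hQ
  have hrD : r < D := by nlinarith
  have cQ : Q.card = r := by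
    rw [hQ, Finset.card_image_of_injOn, Finset.card_range]
    intro x hx y hy h
    simp only [Finset.coe_range, Set.mem_Iio] at hx hy
    have := congrArg ZMod.val h
    simpa [ZMod.val_cast_of_lt (hx.trans hrD), ZMod.val_cast_of_lt (hy.trans hrD)] using this
  have sub : Q ×ˢ Fintype.piFinset (fun _ : Fin s => Q) ⊆ setA D s H 0 := by
    rintro ⟨m, h⟩ hp
    simp only [Finset.mem_product, Fintype.mem_piFinset, hQ, Finset.mem_image,
      Finset.mem_range] at hp
    obtain ⟨⟨k, hk, rfl⟩, hh⟩ := hp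
    choose y hy hyh using hh
    simp only [setA, Finset.mem_filter, Finset.mem_univ, true_and, add_zero]
    intro ε
    have e : ((k : ZMod D) + sg 0 h ε) = ((k + sg 0 y ε : ℕ) : ZMod D) := by
      push_cast
      rw [sg_cast]
      congr 2
      · funext j; simp
      · funext j; exact (hyh j).symm
    have b : sg 0 y ε ≤ s * r := by
      unfold sg
      calc _ ≤ ∑ _j : Fin s, r := Finset.sum_le_sum fun j _ => by
            have := hy j
            split_ifs
            · omega
            · simp
        _ = s * r := by simp
    have lt : k + sg 0 y ε < H := by nlinarith
    rw [e, ZMod.val_cast_of_lt (by omega)]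
    exact lt
  refine le_trans (le_of_eq ?_) (Finset.card_le_card sub)
  rw [Finset.card_product, Fintype.card_piFinset, cQ]
  simp [pow_succ, mul_comm]

lemma setA_anti (D s H K : ℕ) [NeZero D] : (setA D s H K).card ≤ (setA D s H 0).card := by
  classical
  apply Finset.card_le_card
  intro p hp
  simp only [setA, Finset.mem_filter, Finset.mem_univ, true_and] at hp ⊢
  intro ε
  have := hp ε
  omega

/-- box correlation at base point `j` -/
noncomputable def boxB (a : ℕ → ℂ) (s L j : ℕ) : ℝ :=
  (boxS (s := s) (Finset.Icc 1 L) (fun _ m => a (j + m))).re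

lemma cubeG_bound (a : ℕ → ℂ) (ha : ∀ n, ‖a n‖ ≤ 1) (D s H L n : ℕ) [NeZero D] (hD : D = 2 * H) :
    ((L : ℝ) ^ s) ^ 2 * (cubeG (D := D) s (fun z => truncSeq (fun m => a (n + m)) H z.val)).re ≤
      ∑ p ∈ setA D s H (s * L), ((2 : ℝ) ^ s)⁻¹ *
        ∑ ε : Fin s → Bool, boxB a s L (n + ((p.1 + sg 0 p.2 ε).val + 1)) +
      (setC D s H (s * L)).card * ((L : ℝ) ^ s) ^ 2 := by
  classical
  set g : ZMod D → ℂ := fun z => truncSeq (fun m => a (n + m)) H z.val with hg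
  have gle : ∀ z, ‖g z‖ ≤ 1 := by
    intro z
    simp only [hg, truncSeq]
    split_ifs
    · exact ha _
    · simp
  have cardpw : ∀ K : ℕ, ((pw s (Finset.Icc 1 K)).card : ℝ) = (K : ℝ) ^ s := by
    intro K; simp [pw]
  have e1 : ((L : ℝ) ^ s) ^ 2 * (cubeG s g).re = ∑ p : ZMod D × (Fin s → ZMod D),
      ∑ y ∈ pw s (Finset.Icc 1 L), ∑ y' ∈ pw s (Finset.Icc 1 L),
        (cubeP (fun ε => g (p.1 + sg 0 p.2 ε + (sg y y' ε : ℕ)))).re := by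
    rw [Finset.sum_comm]
    rw [pow_two, mul_assoc]
    conv_lhs => rw [← cardpw L, ← nsmul_eq_mul, ← nsmul_eq_mul, ← Finset.sum_const]
    refine Finset.sum_congr rfl fun y _ => ?_
    rw [Finset.sum_comm, ← Finset.sum_const]
    refine Finset.sum_congr rfl fun y' _ => ?_
    rw [cubeG_translate g y y', Fintype.sum_prod_type]
    simp only [Complex.re_sum]
  rw [e1]
  have e2 : (setC D s H (s * L)).card * ((L : ℝ) ^ s) ^ 2 =
      ∑ p ∈ setC D s H (s * L), ((L : ℝ) ^ s) ^ 2 := by simp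
  rw [e2]
  rw [← Finset.sum_filter_add_sum_filter_not Finset.univ (· ∈ setA D s H (s * L))]
  rw [← Finset.sum_filter_add_sum_filter_not (Finset.univ.filter (· ∉ setA D s H (s * L)))
    (· ∈ setC D s H (s * L))]
  have f1 : Finset.univ.filter (· ∈ setA D s H (s * L)) = setA D s H (s * L) := by ext; simp
  rw [f1]
  refine add_le_add (Finset.sum_le_sum fun p hp => ?_) ?_
  · simp only [setA, Finset.mem_filter, Finset.mem_univ, true_and] at hp
    have := gcs (s := s) (Finset.Icc 1 L)
      (fun ε m => a (n + ((p.1 + sg 0 p.2 ε).val + 1) + m))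
    have e : ∑ y ∈ pw s (Finset.Icc 1 L), ∑ y' ∈ pw s (Finset.Icc 1 L),
        (cubeP (fun ε => g (p.1 + sg 0 p.2 ε + (sg y y' ε : ℕ)))).re =
        (boxS (Finset.Icc 1 L) (fun ε m => a (n + ((p.1 + sg 0 p.2 ε).val + 1) + m))).re := by
      unfold boxS
      simp only [Complex.re_sum]
      refine Finset.sum_congr rfl fun y hy => Finset.sum_congr rfl fun y' hy' => ?_
      congr 2
      funext ε
      have h1 := sg_le L y y' hy hy' ε
      have h2 := hp ε
      simp only [hg, truncSeq]
      rw [val_add_cast _ _ (by omega), if_pos (by omega)]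
      congr 1
      ring
    rw [e]
    simp only [boxB]
    rw [le_inv_mul_iff₀ (by positivity)]
    exact this
  · have z0 : ∑ p ∈ (Finset.univ.filter (· ∉ setA D s H (s * L))).filter
        (· ∉ setC D s H (s * L)), ∑ y ∈ pw s (Finset.Icc 1 L), ∑ y' ∈ pw s (Finset.Icc 1 L),
        (cubeP (fun ε => g (p.1 + sg 0 p.2 ε + (sg y y' ε : ℕ)))).re = 0 := by
      refine Finset.sum_eq_zero fun p hp => Finset.sum_eq_zero fun y hy =>
        Finset.sum_eq_zero fun y' hy' => ?_
      simp only [setA, setC, Finset.mem_filter, Finset.mem_univ, true_and, not_forall,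
        not_exists] at hp
      obtain ⟨⟨ε, h1⟩, h2⟩ := hp
      have h3 := h2 ε
      unfold nearB at h3
      have h4 := sg_le L y y' hy hy' ε
      unfold cubeP
      rw [Finset.prod_eq_zero (Finset.mem_univ ε)]
      · simp
      · simp only [hg, truncSeq]
        rw [val_add_cast _ _ (by omega), if_neg (by omega), cjv_zero]
    rw [z0, add_zero]
    refine (Finset.sum_le_sum (g := fun _ => ((L : ℝ) ^ s) ^ 2) fun p hp => ?_).trans ?_
    · rw [pow_two]
      conv_rhs => rw [← cardpw L, ← nsmul_eq_mul, ← Finset.sum_const]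
      refine Finset.sum_le_sum fun y _ => ?_
      rw [← mul_one (((pw s (Finset.Icc 1 L)).card : ℝ)), ← nsmul_eq_mul, ← Finset.sum_const]
      exact Finset.sum_le_sum fun y' _ => (abs_le.1 (cubeP_re_le _ fun ε => gle _)).2
    · refine Finset.sum_le_sum_of_subset_of_nonneg ?_ fun _ _ _ => by positivity
      intro p hp
      exact (Finset.mem_filter.1 hp).2

/-- Proposition 2.5 of the paper (logarithmic case): if `a` is bounded by `1` and admits
correlations for logarithmic averages on intervals `I` with `|I_N| → ∞`, then
`‖a‖_{U^s_{*,log}(I)} ≤ 4 ‖a‖_{U^s_{log}(I)}`. The seminorm `u = ‖a‖_{U^s_{log}(I)}` is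
characterized by `u^{2^s} = lim_{H} 𝔼_{h∈[H]^s} (lim_N 𝔼^{log}_{n∈I_N} ∏_ε C^{|ε|} a(n+ε·h))`,
and the star seminorm is `limsup_H limsup_N 𝔼^{log}_{n∈I_N} ‖S_n a‖_{U^s[H]}`. -/
theorem star_log_seminorm_le_four_mul_log_uniformity_seminorm
    (lo hi : ℕ → ℕ) (I : ℕ → Finset ℕ)
    (hI : ∀ N, I N = Finset.Icc (lo N) (hi N))
    (hlo : ∀ N, 1 ≤ lo N)
    (hIcard : Tendsto (fun N => (I N).card) atTop atTop)
    (a : ℕ → ℂ) (ha : ∀ n, ‖a n‖ ≤ 1)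
    (s : ℕ) (hs : 1 ≤ s)
    (hcorr : ∀ (k : ℕ) (sh : Fin k → ℕ) (cj : Fin k → Bool),
      ∃ L : ℂ, Tendsto (logAvg I fun m => ∏ j,
        if cj j then (starRingEnd ℂ) (a (m + sh j)) else a (m + sh j)) atTop (𝓝 L))
    (u : ℝ) (hu : 0 ≤ u)
    (c : (Fin s → ℕ) → ℂ)
    (hc : ∀ h : Fin s → ℕ, Tendsto (logAvg I (cubeProd a h)) atTop (𝓝 (c h)))
    (hlim : Tendsto (fun H : ℕ => ((H : ℂ) ^ s)⁻¹ *
        ∑ h ∈ Fintype.piFinset (fun _ : Fin s => Finset.Icc 1 H), c h) atTop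
        (𝓝 ((u : ℂ) ^ (2 ^ s)))) :
    limsup (fun H : ℕ => limsup (fun N : ℕ =>
        (∑ n ∈ I N, (n : ℝ)⁻¹)⁻¹ *
          ∑ n ∈ I N, (n : ℝ)⁻¹ * UsShort s H (fun m => a (n + m))) atTop) atTop
      ≤ 4 * u := by
  classical
  have hsc : ∀ k : (Fin s → Bool) → ℕ, ∃ V : ℂ,
      Tendsto (logAvg I (fun m => cubeP (fun ε => a (m + k ε)))) atTop (𝓝 V) := by
    intro k
    set e := Fintype.equivFin (Fin s → Bool) with he
    obtain ⟨V, hV⟩ := hcorr _ (fun j => k (e.symm j))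
      (fun j => decide ((Finset.univ.filter fun i => e.symm j i = true).card % 2 = 1))
    refine ⟨V, ?_⟩
    convert hV using 3 with m
    unfold cubeP
    rw [← Equiv.prod_comp e.symm]
    refine Finset.prod_congr rfl fun j _ => ?_
    simp only [cjv, decide_eq_true_eq]
  choose V hV using hsc
  set v : ((Fin s → Bool) → ℕ) → ℝ := fun k => (V k).re with hvdef
  have hvl : ∀ k : (Fin s → Bool) → ℕ,
      Tendsto (fun N => rA (I N) (fun n => (cubeP (fun ε => a (n + k ε))).re)) atTop (𝓝 (v k)) := by
    intro k
    have := (Complex.continuous_re.tendsto _).comp (hV k)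
    refine this.congr fun N => ?_
    exact re_logAvg I _ N
  have hv1 : ∀ k, |v k| ≤ 1 := fun k =>
    le_of_tendsto' (hvl k).abs fun N => rA_abs_le _ fun n => cubeP_re_le _ fun ε => ha _
  have hsh : ∀ k t, v (fun ε => k ε + t) = v k := by
    intro k t
    have := rA_shift_lim lo hi I hI hlo hIcard
      (fun n => (cubeP (fun ε => a (n + k ε))).re) (fun n => cubeP_re_le _ fun ε => ha _) _ (hvl k) t
    refine tendsto_nhds_unique (hvl _) (this.congr fun N => ?_)
    congr 1
    funext n
    congr 2
    funext ε
    congr 1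
    ring
  set Sg : ℕ → ℝ := fun L => ∑ x ∈ pw s (Finset.Icc 1 L), ∑ x' ∈ pw s (Finset.Icc 1 L), v (sg x x')
    with hSg
  have hbox : ∀ (L : ℕ) (k : (Fin s → Bool) → ℕ),
      Tendsto (fun N => rA (I N) (fun n =>
        (boxS (Finset.Icc 1 L) (fun ε m => a (n + k ε + m))).re)) atTop
      (𝓝 (∑ x ∈ pw s (Finset.Icc 1 L), ∑ x' ∈ pw s (Finset.Icc 1 L),
        v (fun ε => k ε + sg x x' ε))) := by
    intro L k
    have : Tendsto (fun N => ∑ x ∈ pw s (Finset.Icc 1 L), ∑ x' ∈ pw s (Finset.Icc 1 L),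
        rA (I N) (fun n => (cubeP (fun ε => a (n + (k ε + sg x x' ε)))).re)) atTop
      (𝓝 (∑ x ∈ pw s (Finset.Icc 1 L), ∑ x' ∈ pw s (Finset.Icc 1 L),
        v (fun ε => k ε + sg x x' ε))) :=
      tendsto_finsetSum _ fun x _ => tendsto_finsetSum _ fun x' _ => hvl _
    refine this.congr fun N => ?_
    simp only [← rA_sum, boxS, Complex.re_sum, add_assoc]
  have hB : ∀ L j : ℕ, Tendsto (fun N => rA (I N) (fun n => boxB a s L (n + j))) atTop
      (𝓝 (Sg L)) := by
    intro L j
    have := hbox L (fun _ => j)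
    have e : ∑ x ∈ pw s (Finset.Icc 1 L), ∑ x' ∈ pw s (Finset.Icc 1 L),
        v (fun ε => j + sg x x' ε) = Sg L := by
      simp only [hSg]
      refine Finset.sum_congr rfl fun x _ => Finset.sum_congr rfl fun x' _ => ?_
      rw [← hsh (sg x x') j]
      congr 1
      funext ε
      ring
    rw [e] at this
    exact this
  have hgcs : ∀ (L : ℕ) (k : (Fin s → Bool) → ℕ), ∑ x ∈ pw s (Finset.Icc 1 L),
      ∑ x' ∈ pw s (Finset.Icc 1 L), v (fun ε => k ε + sg x x' ε) ≤ Sg L := by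
    intro L k
    have l1 := (hbox L k).const_mul ((2 : ℝ) ^ s)
    have l2 : Tendsto (fun N => ∑ ε : Fin s → Bool, rA (I N) (fun n => boxB a s L (n + k ε))) atTop
        (𝓝 (∑ _ε : Fin s → Bool, Sg L)) := tendsto_finsetSum _ fun ε _ => hB L (k ε)
    have := le_of_tendsto_of_tendsto' l1 l2 (fun N => by
      rw [← rA_sum, ← rA_mul]
      exact rA_mono _ fun n => gcs (Finset.Icc 1 L) (fun ε m => a (n + k ε + m)))
    simp only [Finset.sum_const, Finset.card_univ, Fintype.card_fun, Fintype.card_bool,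
      Fintype.card_fin, nsmul_eq_mul] at this
    push_cast at this
    exact le_of_mul_le_mul_left this (by positivity)
  have hcv : ∀ h : Fin s → ℕ, (c h).re = v (fun ε => epsDot ε h) := by
    intro h
    have : c h = V (fun ε => epsDot ε h) := tendsto_nhds_unique (hc h) (hV _)
    rw [this]
  have hlimr : Tendsto (fun H : ℕ => ((H : ℝ) ^ s)⁻¹ * ∑ h ∈ pw s (Finset.Icc 1 H),
      v (fun ε => epsDot ε h)) atTop (𝓝 (u ^ 2 ^ s)) := by
    have := (Complex.continuous_re.tendsto _).comp hlim
    rw [← Complex.ofReal_pow, Complex.ofReal_re] at this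
    refine this.congr fun H => ?_
    simp only [Function.comp]
    rw [← Complex.ofReal_natCast, ← Complex.ofReal_pow, ← Complex.ofReal_inv,
      Complex.re_ofReal_mul, Complex.re_sum]
    simp only [hcv]
  have hext := extremal v hv1 hsh Sg (fun _ => rfl) hgcs _ hlimr
  have hUn : ∀ H n, 0 ≤ UsShort s H (fun m => a (n + m)) := fun H n =>
    div_nonneg (gowersNorm_nonneg _ _ _) (gowersNorm_nonneg _ _ _)
  change limsup (fun H : ℕ => limsup (fun N : ℕ =>
    rA (I N) (fun n => UsShort s H (fun m => a (n + m)))) atTop) atTop ≤ 4 * u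
  have hfin : ∀ η : ℝ, 0 < η → ∀ᶠ H : ℕ in atTop, ∀ᶠ N : ℕ in atTop,
      rA (I N) (fun n => UsShort s H (fun m => a (n + m))) ≤ u + η := by
    intro η hη
    have hpow : u ^ 2 ^ s < (u + η) ^ 2 ^ s := by gcongr; linarith
    set δ := ((u + η) ^ 2 ^ s - u ^ 2 ^ s) / 3 with hδ
    have hδ0 : 0 < δ := by rw [hδ]; linarith
    obtain ⟨L, hL1, hL⟩ := hext δ hδ0
    have hLp : (0 : ℝ) < L := by exact_mod_cast hL1
    have hU0 : 0 ≤ u ^ 2 ^ s := by positivity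
    -- error term
    set Cst : ℝ := 2 ^ s * (2 ^ s * (2 * (s * L))) * (2 * (s + 1)) ^ (s + 1) with hCst
    have herr : ∀ᶠ H : ℕ in atTop, Cst / (H : ℝ) < δ :=
      (tendsto_const_div_atTop_nhds_zero_nat Cst).eventually_lt_const hδ0
    filter_upwards [herr, eventually_ge_atTop (s + 1)] with H hH1 hH2
    have hH0 : 0 < H := by omega
    have hHp : (0 : ℝ) < H := by exact_mod_cast hH0
    have : NeZero (2 * H) := ⟨by omega⟩
    set W : ℝ := ((setA (2 * H) s H 0).card : ℝ) with hW
    have hWlow : ((H : ℝ) / (2 * (s + 1))) ^ (s + 1) ≤ W := by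
      have h1 : (((H / (s + 1)) ^ (s + 1) : ℕ) : ℝ) ≤ W := by
        rw [hW]; exact_mod_cast setA_lower (2 * H) s H rfl
      refine le_trans ?_ h1
      push_cast
      gcongr
      rw [div_le_iff₀ (by positivity)]
      have h2 : 1 ≤ H / (s + 1) := (Nat.one_le_div_iff (by omega)).2 hH2
      have h3 : H < (H / (s + 1) + 1) * (s + 1) := by
        have := Nat.lt_div_mul_add (a := H) (b := s + 1) (by omega)
        linarith
      have h4 : H ≤ (H / (s + 1)) * (2 * (s + 1)) := by nlinarith
      exact_mod_cast h4
    have hWpos : 0 < W := lt_of_lt_of_le (by positivity) hWlow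
    have hCW : ((setC (2 * H) s H (s * L)).card : ℝ) ≤ δ * W := by
      have h1 : ((setC (2 * H) s H (s * L)).card : ℝ) ≤
          2 ^ s * ((2 * H) ^ s * (2 * (s * L))) := by
        exact_mod_cast setC_card (2 * H) s H (s * L)
      refine h1.trans (le_trans ?_ (mul_le_mul_of_nonneg_left hWlow hδ0.le))
      refine le_trans ?_ (mul_le_mul_of_nonneg_right hH1.le (by positivity))
      rw [hCst]
      apply le_of_eq
      rw [div_pow, mul_pow (2 : ℝ) (H : ℝ), pow_succ (H : ℝ)]
      field_simp
    have hUs : ∀ n, UsShort s H (fun m => a (n + m)) ^ 2 ^ s =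
        W⁻¹ * (cubeG (D := 2 * H) s (fun z => truncSeq (fun m => a (n + m)) H z.val)).re := by
      intro n
      obtain ⟨t, rfl⟩ : ∃ t, s = t + 1 := ⟨s - 1, by omega⟩
      unfold UsShort
      rw [div_pow, gowersNorm_pow, gowersNorm_pow, cubeG_one, ← hW]
      have : ((2 * H : ℕ) : ℝ) ≠ 0 := by push_cast; positivity
      field_simp
    have hev : ∀ᶠ N : ℕ in atTop, ∀ j ∈ Finset.range (2 * H + 1),
        rA (I N) (fun n => boxB a s L (n + j)) < ((L : ℝ) ^ s) ^ 2 * (u ^ 2 ^ s + 2 * δ) := by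
      rw [Filter.eventually_all_finset]
      intro j _
      refine (hB L j).eventually_lt_const (hL.trans_lt ?_)
      have : 0 < ((L : ℝ) ^ s) ^ 2 := by positivity
      gcongr
      linarith
    filter_upwards [hev] with N hN
    have hZ : rA (I N) (fun n =>
        (cubeG (D := 2 * H) s (fun z => truncSeq (fun m => a (n + m)) H z.val)).re) ≤
        W * (u + η) ^ 2 ^ s := by
      have h1 := rA_mono (I N) fun n => cubeG_bound a ha (2 * H) s H L n rfl
      rw [rA_mul, rA_add, rA_sum] at h1
      simp only [rA_mul, rA_sum] at h1
      have h2 : ∑ p ∈ setA (2 * H) s H (s * L), ((2 : ℝ) ^ s)⁻¹ * ∑ ε : Fin s → Bool,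
          rA (I N) (fun n => boxB a s L (n + ((p.1 + sg 0 p.2 ε).val + 1))) ≤
          W * (((L : ℝ) ^ s) ^ 2 * (u ^ 2 ^ s + 2 * δ)) := by
        calc _ ≤ ∑ p ∈ setA (2 * H) s H (s * L), ((L : ℝ) ^ s) ^ 2 * (u ^ 2 ^ s + 2 * δ) := by
              refine Finset.sum_le_sum fun p _ => ?_
              rw [inv_mul_le_iff₀ (by positivity)]
              refine (Finset.sum_le_sum fun ε _ => (hN _ ?_).le).trans ?_
              · have := ZMod.val_lt (p.1 + sg 0 p.2 ε)
                rw [Finset.mem_range]; omega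
              · simp
          _ = ((setA (2 * H) s H (s * L)).card : ℝ) *
              (((L : ℝ) ^ s) ^ 2 * (u ^ 2 ^ s + 2 * δ)) := by simp
          _ ≤ _ := by
              gcongr
              rw [hW]
              exact_mod_cast setA_anti (2 * H) s H (s * L)
      have h3 := rA_const_le (I N) (((setC (2 * H) s H (s * L)).card : ℝ) * ((L : ℝ) ^ s) ^ 2)
        (by positivity)
      rw [rA_mul] at h3
      have hl : 0 < ((L : ℝ) ^ s) ^ 2 := by positivity
      refine le_of_mul_le_mul_left ?_ hl
      have h4 : ((setC (2 * H) s H (s * L)).card : ℝ) * ((L : ℝ) ^ s) ^ 2 ≤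
          δ * W * ((L : ℝ) ^ s) ^ 2 := by gcongr
      have h5 : (u + η) ^ 2 ^ s = u ^ 2 ^ s + 3 * δ := by rw [hδ]; ring
      rw [h5]
      linarith
    have hJ := rA_pow_le (I N) (hUn H) (2 ^ s) (by positivity)
    simp only [hUs] at hJ
    rw [rA_mul] at hJ
    have h6 : rA (I N) (fun n => UsShort s H (fun m => a (n + m))) ^ 2 ^ s ≤ (u + η) ^ 2 ^ s := by
      refine hJ.trans ?_
      rw [inv_mul_le_iff₀ hWpos]
      exact hZ
    exact le_of_pow_le_pow_left₀ (by positivity) (by linarith) h6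
  have hu4 : u ≤ 4 * u := by linarith
  refine le_trans ?_ hu4
  refine le_of_forall_pos_le_add fun η hη => ?_
  have hcob : ∀ H : ℕ, IsCoboundedUnder (· ≤ ·) atTop (fun N : ℕ =>
      rA (I N) (fun n => UsShort s H (fun m => a (n + m)))) := fun H =>
    IsCoboundedUnder.of_frequently_ge (a := 0)
      (Eventually.frequently (Eventually.of_forall fun N => rA_nonneg _ (hUn H)))
  have hin : ∀ᶠ H : ℕ in atTop, limsup (fun N : ℕ =>
      rA (I N) (fun n => UsShort s H (fun m => a (n + m)))) atTop ≤ u + η := by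
    filter_upwards [hfin η hη] with H hH
    exact limsup_le_of_le (hcob H) hH
  have hin0 : ∀ᶠ H : ℕ in atTop, 0 ≤ limsup (fun N : ℕ =>
      rA (I N) (fun n => UsShort s H (fun m => a (n + m)))) atTop := by
    filter_upwards [hfin η hη] with H hH
    exact le_limsup_of_frequently_le
      (Eventually.frequently (Eventually.of_forall fun N => rA_nonneg _ (hUn H)))
      ⟨u + η, by simpa using hH⟩
  exact limsup_le_of_le (IsCoboundedUnder.of_frequently_ge (a := 0) hin0.frequently) hin
end

section
/- For any bounded sequence a : ℕ → ℂ and any sequence of intervals I = (I_N) with |I_N| → ∞, there exists a probability measure-preserving system (X, 𝒳, μ, T) and F ∈ L^∞(μ), together with a subsequence I' of I along which all correlations of a exist, such that for all s ∈ ℕ, n₁,…,n_s ∈ ℕ, and choices a_j ∈ {a, conj(a)} with corresponding F_j ∈ {F, conj(F)}, one has lim 𝔼_{m∈I'} a₁(m+n₁)⋯a_s(m+n_s) = ∫ T^{n₁}F₁ ⋯ T^{n_s}F_s dμ. -/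
open Filter Topology MeasureTheory

/-- Integral against an averaged sum of Dirac masses. -/
lemma integral_empirical {X : Type} [MeasurableSpace X] [MeasurableSingletonClass X]
    {E : Type} [NormedAddCommGroup E] [NormedSpace ℝ E] [CompleteSpace E]
    (S : Finset ℕ) (w : ℕ → X) (f : X → E) :
    ∫ x, f x ∂((S.card : ENNReal)⁻¹ • ∑ m ∈ S, Measure.dirac (w m))
      = (S.card : ℝ)⁻¹ • ∑ m ∈ S, f (w m) := by
  rw [integral_smul_measure, integral_finsetSum_measure]
  · simp
  · intro i _
    exact integrable_dirac (by simp)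

lemma sum_shift_bound (g : ℕ → ℝ) (B : ℝ) (hg : ∀ n, |g n| ≤ B) (l h : ℕ) :
    |∑ m ∈ Finset.Icc l h, g (m + 1) - ∑ m ∈ Finset.Icc l h, g m| ≤ 2 * B := by
  have hB : 0 ≤ B := (abs_nonneg _).trans (hg 0)
  rcases le_or_gt l h with hlh | hlh
  · have h1 : Finset.Icc l h = Finset.Ico l (h + 1) := by ext; simp
    rw [← Finset.sum_sub_distrib, h1, Finset.sum_Ico_sub _ (by omega)]
    have a1 := abs_le.1 (hg (h + 1))
    have a2 := abs_le.1 (hg l)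
    rw [abs_le]; constructor <;> linarith
  · rw [Finset.Icc_eq_empty (by omega)]; simpa using hB

/-- Furstenberg correspondence principle (Proposition 2.3 of the paper, in subsequential
form): for any bounded sequence `a : ℕ → ℂ` and intervals `I_N` with `|I_N| → ∞`, there
exist a probability measure-preserving system `(X, μ, T)`, a bounded measurable function
`F`, and a subsequence along which all correlations of `a` exist and equal the
corresponding integrals `∫ T^{n₁}F₁ ⋯ T^{n_s}F_s dμ`. -/
theorem furstenberg_correspondence
    (a : ℕ → ℂ) (C : ℝ) (hC : ∀ n, ‖a n‖ ≤ C)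
    (lo hi : ℕ → ℕ) (I : ℕ → Finset ℕ)
    (hI : ∀ N, I N = Finset.Icc (lo N) (hi N))
    (hIcard : Tendsto (fun N => (I N).card) atTop atTop) :
    ∃ (X : Type) (_ : MeasurableSpace X) (μ : Measure X) (T : X → X) (F : X → ℂ)
      (φ : ℕ → ℕ),
      IsProbabilityMeasure μ ∧
      MeasurePreserving T μ μ ∧
      Measurable F ∧ (∀ x, ‖F x‖ ≤ C) ∧
      StrictMono φ ∧
      ∀ (s : ℕ) (n : Fin s → ℕ) (cj : Fin s → Bool),
        Tendsto (fun k => ((I (φ k)).card : ℂ)⁻¹ * ∑ m ∈ I (φ k),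
            ∏ j, if cj j then (starRingEnd ℂ) (a (m + n j)) else a (m + n j)) atTop
          (𝓝 (∫ x, (∏ j, if cj j then (starRingEnd ℂ) (F (T^[n j] x))
              else F (T^[n j] x)) ∂μ)) := by
  classical
  let D := Metric.closedBall (0 : ℂ) C
  let X := ℕ → D
  haveI : CompactSpace D := isCompact_iff_compactSpace.1 (isCompact_closedBall (0 : ℂ) C)
  let w : ℕ → X := fun m k => ⟨a (m + k), by simpa [D] using hC (m + k)⟩
  let T : X → X := fun x k => x (k + 1)
  have hT : Continuous T := by
    refine continuous_pi fun k => continuous_apply (k + 1)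
  have hTw : ∀ m, T (w m) = w (m + 1) := by
    intro m; funext k
    simp only [T, w, Subtype.mk.injEq]
    congr 1; omega
  have hTi : ∀ (n : ℕ) (x : X), T^[n] x = fun k => x (k + n) := by
    intro n
    induction n with
    | zero => intro x; rfl
    | succ n ih =>
      intro x
      rw [Function.iterate_succ_apply, ih]
      funext k
      simp only [T]
      congr 1
  let F : X → ℂ := fun x => (x 0 : ℂ)
  have hF : Continuous F := continuous_subtype_val.comp (continuous_apply 0)
  have hν : ∀ N, ∃ ν : ProbabilityMeasure X, (I N).Nonempty →
      (ν : Measure X) = ((I N).card : ENNReal)⁻¹ • ∑ m ∈ I N, Measure.dirac (w m) := by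
    intro N
    by_cases hne : (I N).Nonempty
    · refine ⟨⟨_, ⟨?_⟩⟩, fun _ => rfl⟩
      simp only [Measure.smul_apply, Measure.finsetSum_apply, measure_univ, Finset.sum_const,
        nsmul_eq_mul, mul_one, smul_eq_mul]
      exact ENNReal.inv_mul_cancel (by simpa using hne.ne_empty) (by simp)
    · exact ⟨⟨Measure.dirac (w 0), inferInstance⟩, fun h => absurd h hne⟩
  choose ν hν using hν
  obtain ⟨μ, φ, hφ, hlim⟩ := CompactSpace.tendsto_subseq ν
  have hcard : Tendsto (fun k => (I (φ k)).card) atTop atTop := hIcard.comp hφ.tendsto_atTop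
  have hne : ∀ᶠ k in atTop, (I (φ k)).Nonempty := by
    filter_upwards [hcard.eventually_ge_atTop 1] with k hk
    exact Finset.card_pos.1 hk
  refine ⟨X, inferInstance, μ, T, F, φ, inferInstance, ⟨hT.measurable, ?_⟩, hF.measurable,
    fun x => mem_closedBall_zero_iff.1 (x 0).2, hφ, ?_⟩
  · have : IsProbabilityMeasure (Measure.map T (μ : Measure X)) :=
      Measure.isProbabilityMeasure_map hT.measurable.aemeasurable
    apply ext_of_forall_integral_eq_of_IsFiniteMeasure
    intro f
    rw [integral_map hT.measurable.aemeasurable f.continuous.aestronglyMeasurable]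
    let fT : BoundedContinuousFunction X ℝ := f.compContinuous ⟨T, hT⟩
    have h1 := ProbabilityMeasure.tendsto_iff_forall_integral_tendsto.1 hlim f
    have h2 := ProbabilityMeasure.tendsto_iff_forall_integral_tendsto.1 hlim fT
    have h3 := h2.sub h1
    have h4 : Tendsto (fun k => ((I (φ k)).card : ℝ)⁻¹ * (2 * ‖f‖)) atTop (𝓝 0) := by
      have := (tendsto_inv_atTop_zero.comp
        (tendsto_natCast_atTop_atTop (R := ℝ) |>.comp hcard)).mul_const (2 * ‖f‖)
      simpa using this
    have h5 := squeeze_zero_norm' (f := fun k =>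
      (∫ x, fT x ∂((ν ∘ φ) k : Measure X)) - ∫ x, f x ∂((ν ∘ φ) k : Measure X)) (by
        filter_upwards [hne] with k hk
        simp only [Function.comp_apply, hν _ hk]
        rw [integral_empirical, integral_empirical, ← smul_sub, norm_smul, norm_inv,
          Real.norm_natCast]
        refine mul_le_mul_of_nonneg_left ?_ (by positivity)
        have := sum_shift_bound (fun m => f (w m)) ‖f‖ (fun m => f.norm_coe_le_norm _)
          (lo (φ k)) (hi (φ k))
        rw [← hI] at this
        simpa [fT, hTw] using this) h4
    have := tendsto_nhds_unique h3 h5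
    exact sub_eq_zero.1 this
  · intro s n cj
    let G : X → ℂ := fun x => ∏ j, if cj j then (starRingEnd ℂ) (F (T^[n j] x))
      else F (T^[n j] x)
    have hG : Continuous G := by
      refine continuous_finsetProd _ fun j _ => ?_
      have hc : Continuous fun x => F (T^[n j] x) := hF.comp (hT.iterate (n j))
      split_ifs
      · exact Complex.continuous_conj.comp hc
      · exact hc
    have h1 := (ProbabilityMeasure.tendsto_iff_forall_integral_rclike_tendsto ℂ).1 hlim
      (BoundedContinuousFunction.mkOfCompact ⟨G, hG⟩)
    refine h1.congr' ?_
    filter_upwards [hne] with k hk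
    simp only [Function.comp_apply, hν _ hk]
    rw [integral_empirical]
    simp [G, F, hTi, w, Complex.real_smul]
end

section
/- Let s ∈ ℕ and let a : ℕ → ℂ be bounded by 1 and admit correlations for Cesàro averages on a sequence of intervals I = (I_N) with |I_N| → ∞. For each N let (X_N, μ_N, T_N) be a measure-preserving system, F_{0,N}, F_{1,N},…,F_{s-1,N} ∈ L^∞(μ_N) bounded by 1, and k₁,…,k_{s-1} ∈ ℤ. Then limsup_{N→∞} |𝔼_{n∈I_N} a(n) ∫ F_{0,N}·T_N^{k₁n}F_{1,N}⋯T_N^{k_{s-1}n}F_{s-1,N} dμ_N| ≤ 4‖a‖_{U^s(I)}. -/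
open Filter Finset Topology MeasureTheory

/-- Cesàro average of `f` over the interval `I N`. -/
noncomputable def cesaroAvg (I : ℕ → Finset ℕ) (f : ℕ → ℂ) (N : ℕ) : ℂ :=
  ((I N).card : ℂ)⁻¹ * ∑ n ∈ I N, f n

namespace AUE

/-- Bounded real sequences. -/
def Bd (f : ℕ → ℝ) : Prop := ∃ C : ℝ, ∀ n, |f n| ≤ C

/-- A shift invariant mean on bounded real sequences. -/
structure IsMean (m : (ℕ → ℝ) → ℝ) : Prop where
  add : ∀ f g, Bd f → Bd g → m (fun n => f n + g n) = m f + m g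
  smul : ∀ (c : ℝ) f, Bd f → m (fun n => c * f n) = c * m f
  mono : ∀ (c : ℝ) f g, Bd f → Bd g → (∀ n, f n ≤ g n + c) → m f ≤ m g + c
  shift : ∀ f, Bd f → m (fun n => f (n + 1)) = m f

/-- multiplicative derivative -/
noncomputable def del (d : ℕ) (b : ℕ → ℂ) : ℕ → ℂ := fun n => b n * (starRingEnd ℂ) (b (n + d))

/-- Fejer average. -/
noncomputable def FA (L : ℕ) (ψ : ℕ → ℝ) : ℝ :=
  ((L : ℝ) ^ 2)⁻¹ * ∑ i ∈ range L, ∑ j ∈ range L, ψ (Nat.dist i j)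

/-- Uniform average. -/
noncomputable def UA (H : ℕ) (ψ : ℕ → ℝ) : ℝ := (H : ℝ)⁻¹ * ∑ d ∈ range H, ψ (d + 1)

/-- iterated averages -/
noncomputable def Q (m : (ℕ → ℝ) → ℝ) (E : (ℕ → ℝ) → ℝ) : ℕ → (ℕ → ℂ) → ℝ
  | 0, b => m (fun n => (b n).re)
  | s + 1, b => E (fun d => Q m E s (del d b))

lemma del_bd {b : ℕ → ℂ} (hb : ∀ n, ‖b n‖ ≤ 1) (d : ℕ) : ∀ n, ‖del d b n‖ ≤ 1 := by
  intro n
  simp only [del, norm_mul, RCLike.norm_conj]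
  exact mul_le_one₀ (hb _) (norm_nonneg _) (hb _)

lemma del_comm (d e : ℕ) (b : ℕ → ℂ) : del d (del e b) = del e (del d b) := by
  funext n
  simp only [del, map_mul, Complex.conj_conj]
  rw [show n + d + e = n + e + d by ring]
  ring

lemma FA_mono {L : ℕ} (hL : 1 ≤ L) {ψ φ : ℕ → ℝ} {c : ℝ} (h : ∀ d, ψ d ≤ φ d + c) :
    FA L ψ ≤ FA L φ + c := by
  have hL' : (0:ℝ) < L := by exact_mod_cast hL
  have : c = ((L : ℝ) ^ 2)⁻¹ * ∑ i ∈ range L, ∑ j ∈ range L, c := by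
    simp; field_simp
  rw [this]
  unfold FA
  rw [← mul_add]
  simp only [← Finset.sum_add_distrib]
  gcongr
  exact h _

lemma UA_mono {L : ℕ} (hL : 1 ≤ L) {ψ φ : ℕ → ℝ} {c : ℝ} (h : ∀ d, ψ d ≤ φ d + c) :
    UA L ψ ≤ UA L φ + c := by
  have hL' : (0:ℝ) < L := by exact_mod_cast hL
  have : c = ((L : ℝ))⁻¹ * ∑ i ∈ range L, c := by
    simp; field_simp
  rw [this]
  unfold UA
  rw [← mul_add]
  simp only [← Finset.sum_add_distrib]
  gcongr
  exact h _

lemma UA_add (L : ℕ) (ψ φ : ℕ → ℝ) : UA L (fun d => ψ d + φ d) = UA L ψ + UA L φ := by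
  simp only [UA, Finset.sum_add_distrib, mul_add]
lemma UA_smul (L : ℕ) (c : ℝ) (ψ : ℕ → ℝ) : UA L (fun d => c * ψ d) = c * UA L ψ := by
  simp only [UA, ← Finset.mul_sum]; ring
lemma FA_add (L : ℕ) (ψ φ : ℕ → ℝ) : FA L (fun d => ψ d + φ d) = FA L ψ + FA L φ := by
  simp only [FA, Finset.sum_add_distrib, mul_add]
lemma FA_smul (L : ℕ) (c : ℝ) (ψ : ℕ → ℝ) : FA L (fun d => c * ψ d) = c * FA L ψ := by
  simp only [FA, ← Finset.mul_sum]; ring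

lemma FA_FA (L K : ℕ) (f : ℕ → ℕ → ℝ) :
    FA L (fun d => FA K (fun e => f d e)) = FA K (fun e => FA L (fun d => f d e)) := by
  simp only [FA, Finset.mul_sum]
  simp only [← Finset.sum_product' (range _) (range _)]
  rw [Finset.sum_comm]
  refine Finset.sum_congr rfl fun x _ => Finset.sum_congr rfl fun y _ => by ring

lemma UA_FA (L K : ℕ) (f : ℕ → ℕ → ℝ) :
    UA L (fun d => FA K (fun e => f d e)) = FA K (fun e => UA L (fun d => f d e)) := by
  simp only [FA, UA, Finset.mul_sum]
  rw [Finset.sum_comm]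
  refine Finset.sum_congr rfl fun x _ => ?_
  rw [Finset.sum_comm]
  refine Finset.sum_congr rfl fun y _ => Finset.sum_congr rfl fun z _ => by ring

/-- the one-variable inequalities -/
def P (L H K : ℕ) (ε : ℝ) (ψ : ℕ → ℝ) : Prop :=
  FA K ψ ≤ FA L ψ + ε ∧ UA H ψ ≤ FA L ψ + ε ∧ 2 * FA K ψ ≤ UA H ψ + FA L ψ + ε

lemma P_FA {L H K M : ℕ} {ε : ℝ} (hM : 1 ≤ M) (f : ℕ → ℕ → ℝ)
    (h : ∀ e, P L H K ε (fun d => f d e)) : P L H K ε (fun d => FA M (fun e => f d e)) := by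
  unfold P
  rw [FA_FA K M, FA_FA L M, UA_FA]
  refine ⟨FA_mono hM fun e => (h e).1, FA_mono hM fun e => (h e).2.1, ?_⟩
  rw [← FA_smul, ← FA_add]
  exact FA_mono hM fun e => (h e).2.2

lemma P_Q {m : (ℕ → ℝ) → ℝ} {L H K M : ℕ} {ε : ℝ} (hM : 1 ≤ M)
    (h0 : ∀ b : ℕ → ℂ, (∀ n, ‖b n‖ ≤ 1) → P L H K ε (fun d => m (fun n => (del d b n).re)))
    (s : ℕ) : ∀ b : ℕ → ℂ, (∀ n, ‖b n‖ ≤ 1) → P L H K ε (fun d => Q m (FA M) s (del d b)) := by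
  induction s with
  | zero => intro b hb; exact h0 b hb
  | succ s ih =>
    intro b hb
    simp only [Q]
    apply P_FA hM
    intro e
    simp only [del_comm e]
    exact ih _ (del_bd hb e)

lemma Q_mono {m : (ℕ → ℝ) → ℝ} {L H K : ℕ} {ε : ℝ} (hL : 1 ≤ L) (hK : 1 ≤ K)
    (h0 : ∀ b : ℕ → ℂ, (∀ n, ‖b n‖ ≤ 1) → P L H K ε (fun d => m (fun n => (del d b n).re)))
    (s : ℕ) : ∀ b : ℕ → ℂ, (∀ n, ‖b n‖ ≤ 1) → Q m (FA K) s b ≤ Q m (FA L) s b + s * ε := by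
  induction s with
  | zero => intro b hb; simp [Q]
  | succ s ih =>
    intro b hb
    have h1 := (P_Q hK h0 s b hb).1
    have h2 : FA L (fun d => Q m (FA K) s (del d b)) ≤ FA L (fun d => Q m (FA L) s (del d b)) + s * ε :=
      FA_mono hL fun d => ih _ (del_bd hb d)
    simp only [Q]
    push_cast
    linarith

lemma Q_lower (s : ℕ) : ∃ C : ℝ, ∀ (m : (ℕ → ℝ) → ℝ) (L H K : ℕ) (ε : ℝ), 1 ≤ L → 1 ≤ H → 1 ≤ K →
    (∀ b : ℕ → ℂ, (∀ n, ‖b n‖ ≤ 1) → P L H K ε (fun d => m (fun n => (del d b n).re))) →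
    ∀ b : ℕ → ℂ, (∀ n, ‖b n‖ ≤ 1) →
      2 ^ s * Q m (FA K) s b ≤ Q m (UA H) s b + (2 ^ s - 1) * Q m (FA L) s b + C * ε := by
  induction s with
  | zero => exact ⟨0, by intros; simp [Q]⟩
  | succ s ih =>
    obtain ⟨C, ih⟩ := ih
    refine ⟨C + 2 ^ s * (1 + s) + (2 ^ s - 1), ?_⟩
    intro m L H K ε hL hH hK h0 b hb
    have h1 : UA H (fun d => 2 ^ s * Q m (FA K) s (del d b)) ≤
        UA H (fun d => Q m (UA H) s (del d b) + (2 ^ s - 1) * Q m (FA L) s (del d b)) + C * ε :=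
      UA_mono hH fun d => ih m L H K ε hL hH hK h0 _ (del_bd hb d)
    rw [UA_smul, UA_add, UA_smul] at h1
    have h2 := (P_Q hK h0 s b hb).2.2
    have h3 : FA L (fun d => Q m (FA K) s (del d b)) ≤ FA L (fun d => Q m (FA L) s (del d b)) + s * ε :=
      FA_mono hL fun d => Q_mono hL hK h0 s _ (del_bd hb d)
    have h4 := (P_Q hL h0 s b hb).2.1
    simp only [Q]
    have hp : (1:ℝ) ≤ 2 ^ s := one_le_pow₀ (by norm_num)
    have h5 := mul_le_mul_of_nonneg_left h4 (sub_nonneg.2 hp)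
    have h6 := mul_le_mul_of_nonneg_left (h2.trans (by linarith :
      _ ≤ UA H (fun d => Q m (FA K) s (del d b)) +
        (FA L (fun d => Q m (FA L) s (del d b)) + s * ε) + ε)) (by linarith : (0:ℝ) ≤ 2 ^ s)
    rw [pow_succ]
    linarith


lemma normsq_avg (L : ℕ) (z : ℕ → ℂ) :
    ‖(L : ℂ)⁻¹ * ∑ i ∈ range L, z i‖ ^ 2 =
      ((L : ℝ) ^ 2)⁻¹ * ∑ i ∈ range L, ∑ j ∈ range L, (z i * (starRingEnd ℂ) (z j)).re := by
  rw [norm_mul, mul_pow, norm_inv, Complex.norm_natCast, inv_pow]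
  congr 1
  rw [← Complex.normSq_eq_norm_sq, ← Complex.ofReal_re (Complex.normSq _), Complex.normSq_eq_conj_mul_self,
    map_sum, mul_comm, Finset.sum_mul_sum, Complex.re_sum]
  simp only [Complex.re_sum]

lemma avg_norm_le {L : ℕ} {z : ℕ → ℂ} {c : ℝ} (hc : 0 ≤ c) (hz : ∀ i ∈ range L, ‖z i‖ ≤ c) :
    ‖(L : ℂ)⁻¹ * ∑ i ∈ range L, z i‖ ≤ c := by
  rw [norm_mul, norm_inv, Complex.norm_natCast]
  have h1 : ‖∑ i ∈ range L, z i‖ ≤ L * c := by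
    calc _ ≤ ∑ i ∈ range L, ‖z i‖ := norm_sum_le _ _
      _ ≤ ∑ i ∈ range L, c := Finset.sum_le_sum hz
      _ = _ := by simp
  rcases Nat.eq_zero_or_pos L with rfl | hL
  · simpa using hc
  · have hL' : (0:ℝ) < L := by exact_mod_cast hL
    rw [inv_mul_le_iff₀ hL']; exact h1

/-- sliding average -/
noncomputable def BL (L : ℕ) (b : ℕ → ℂ) (n : ℕ) : ℂ := (L : ℂ)⁻¹ * ∑ i ∈ range L, b (n + i)

lemma BL_bd {b : ℕ → ℂ} (hb : ∀ n, ‖b n‖ ≤ 1) (L n : ℕ) : ‖BL L b n‖ ≤ 1 :=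
  avg_norm_le zero_le_one fun _ _ => hb _

lemma BL_shift1 {b : ℕ → ℂ} (hb : ∀ n, ‖b n‖ ≤ 1) (K n : ℕ) :
    ‖BL K b (n + 1) - BL K b n‖ ≤ 2 / K := by
  unfold BL
  rw [← mul_sub, ← Finset.sum_sub_distrib]
  have : ∑ i ∈ range K, (b (n + 1 + i) - b (n + i)) = b (n + K) - b n := by
    have := Finset.sum_range_sub (fun i => b (n + i)) K
    simpa [add_assoc, add_comm 1] using this
  rw [this, norm_mul, norm_inv, Complex.norm_natCast, div_eq_inv_mul]
  gcongr
  calc _ ≤ _ := norm_sub_le _ _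
    _ ≤ 2 := by linarith [hb (n + K), hb n]

lemma BL_shift {b : ℕ → ℂ} (hb : ∀ n, ‖b n‖ ≤ 1) (K n i : ℕ) :
    ‖BL K b (n + i) - BL K b n‖ ≤ 2 * i / K := by
  induction i with
  | zero => simp
  | succ i ih =>
    have h := BL_shift1 hb K (n + i)
    calc _ = ‖(BL K b (n + i + 1) - BL K b (n + i)) + (BL K b (n + i) - BL K b n)‖ := by
          rw [← add_assoc]; ring_nf
      _ ≤ _ := norm_add_le _ _
      _ ≤ 2 / K + 2 * i / K := add_le_add h ih
      _ = _ := by push_cast; ring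

lemma BL_BL {b : ℕ → ℂ} (hb : ∀ n, ‖b n‖ ≤ 1) {L : ℕ} (hL : 1 ≤ L) (K n : ℕ) :
    ‖BL K (BL L b) n - BL K b n‖ ≤ 2 * L / K := by
  have hL' : (L : ℂ) ≠ 0 := by exact_mod_cast (by omega : L ≠ 0)
  have : BL K (BL L b) n - BL K b n = (L : ℂ)⁻¹ * ∑ i ∈ range L, (BL K b (n + i) - BL K b n) := by
    rw [Finset.sum_sub_distrib, mul_sub]
    congr 1
    · simp only [BL, Finset.mul_sum]
      rw [Finset.sum_comm]
      refine Finset.sum_congr rfl fun x _ => Finset.sum_congr rfl fun y _ => ?_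
      rw [show n + y + x = n + x + y by ring]; ring
    · simp; field_simp
  rw [this]
  apply avg_norm_le (by positivity)
  intro i hi
  refine (BL_shift hb K n i).trans ?_
  have : (i : ℝ) ≤ L := by exact_mod_cast (Finset.mem_range.1 hi).le
  gcongr

lemma bd_re {f : ℕ → ℂ} {C : ℝ} (hf : ∀ n, ‖f n‖ ≤ C) : Bd (fun n => (f n).re) :=
  ⟨C, fun n => (Complex.abs_re_le_norm _).trans (hf n)⟩

lemma bd_sq {f : ℕ → ℂ} (hf : ∀ n, ‖f n‖ ≤ 1) : Bd (fun n => ‖f n‖ ^ 2) :=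
  ⟨1, fun n => by rw [abs_of_nonneg (by positivity)]; exact pow_le_one₀ (norm_nonneg _) (hf n)⟩

lemma mul_bd {f g : ℕ → ℂ} (hf : ∀ n, ‖f n‖ ≤ 1) (hg : ∀ n, ‖g n‖ ≤ 1) (n : ℕ) :
    ‖f n * (starRingEnd ℂ) (g n)‖ ≤ 1 := by
  simp only [norm_mul, RCLike.norm_conj]
  exact mul_le_one₀ (hf _) (norm_nonneg _) (hg _)

lemma Bd.sum {ι : Type*} {S : Finset ι} {f : ι → ℕ → ℝ} (h : ∀ i, Bd (f i)) :
    Bd (fun n => ∑ i ∈ S, f i n) := by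
  choose C hC using h
  exact ⟨∑ i ∈ S, C i, fun n => (Finset.abs_sum_le_sum_abs _ _).trans
    (Finset.sum_le_sum fun i _ => hC i n)⟩

lemma Bd.smul {f : ℕ → ℝ} (h : Bd f) (c : ℝ) : Bd (fun n => c * f n) := by
  obtain ⟨C, hC⟩ := h
  exact ⟨|c| * C, fun n => by rw [abs_mul]; gcongr; exact hC n⟩

lemma Bd.shift {f : ℕ → ℝ} (h : Bd f) (k : ℕ) : Bd (fun n => f (n + k)) := by
  obtain ⟨C, hC⟩ := h
  exact ⟨C, fun n => hC _⟩

namespace IsMean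
variable {m : (ℕ → ℝ) → ℝ}

lemma sum (hm : IsMean m) {ι : Type*} (S : Finset ι) (f : ι → ℕ → ℝ) (h : ∀ i, Bd (f i)) :
    m (fun n => ∑ i ∈ S, f i n) = ∑ i ∈ S, m (f i) := by
  classical
  induction S using Finset.induction_on with
  | empty =>
    have := hm.smul 0 (fun _ => 0) ⟨0, by simp⟩
    simpa using this
  | insert i S hi ih =>
    simp only [Finset.sum_insert hi]
    rw [hm.add _ _ (h i) (Bd.sum h), ih]

lemma shiftk (hm : IsMean m) (f : ℕ → ℝ) (h : Bd f) (k : ℕ) : m (fun n => f (n + k)) = m f := by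
  induction k with
  | zero => simp
  | succ k ih =>
    rw [← ih, ← hm.shift _ (h.shift k)]
    congr 1; funext n; congr 1; ring

lemma corr (hm : IsMean m) {b : ℕ → ℂ} (hb : ∀ n, ‖b n‖ ≤ 1) (i j : ℕ) :
    m (fun n => (b (n + i) * (starRingEnd ℂ) (b (n + j))).re) =
      m (fun n => (del (Nat.dist i j) b n).re) := by
  have hB : ∀ d, Bd (fun n => (del d b n).re) := fun d => bd_re (del_bd hb d)
  rcases le_total i j with h | h
  · rw [Nat.dist_eq_sub_of_le h, ← hm.shiftk _ (hB _) i]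
    congr 1; funext n
    simp only [del]
    rw [show n + i + (j - i) = n + j by omega]
  · rw [Nat.dist_eq_sub_of_le_right h, ← hm.shiftk _ (hB _) j]
    congr 1; funext n
    simp only [del]
    rw [show n + j + (i - j) = n + i by omega]
    simp; ring

lemma FA_eq (hm : IsMean m) {b : ℕ → ℂ} (hb : ∀ n, ‖b n‖ ≤ 1) (L : ℕ) :
    FA L (fun d => m (fun n => (del d b n).re)) = m (fun n => ‖BL L b n‖ ^ 2) := by
  have hB : ∀ i j, Bd (fun n => (b (n + i) * (starRingEnd ℂ) (b (n + j))).re) := fun i j =>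
    bd_re (mul_bd (f := fun n => b (n + i)) (g := fun n => b (n + j)) (fun n => hb _) (fun n => hb _))
  simp only [BL, normsq_avg]
  rw [hm.smul _ _ (Bd.sum fun i => Bd.sum fun j => hB i j),
    hm.sum _ _ (fun i => Bd.sum fun j => hB i j)]
  simp only [FA]
  congr 1
  refine Finset.sum_congr rfl fun i _ => ?_
  rw [hm.sum _ _ (fun j => hB i j)]
  exact Finset.sum_congr rfl fun j _ => (hm.corr hb i j).symm

lemma sq_avg (hm : IsMean m) {z : ℕ → ℂ} (hz : ∀ n, ‖z n‖ ≤ 1) {K : ℕ} (hK : 1 ≤ K) :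
    m (fun n => ‖BL K z n‖ ^ 2) ≤ m (fun n => ‖z n‖ ^ 2) := by
  have hK' : (0:ℝ) < K := by exact_mod_cast hK
  have h1 : m (fun n => (K:ℝ)⁻¹ * ∑ i ∈ range K, ‖z (n + i)‖ ^ 2) = m (fun n => ‖z n‖ ^ 2) := by
    rw [hm.smul _ _ (Bd.sum fun i => (bd_sq hz).shift i),
      hm.sum _ (fun i n => ‖z (n + i)‖ ^ 2) (fun i => (bd_sq hz).shift i)]
    simp only [hm.shiftk _ (bd_sq hz)]
    simp; field_simp
  rw [← h1]
  have := hm.mono 0 (fun n => ‖BL K z n‖ ^ 2) (fun n => (K:ℝ)⁻¹ * ∑ i ∈ range K, ‖z (n + i)‖ ^ 2)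
    (bd_sq (BL_bd hz K)) (Bd.smul (Bd.sum fun i => (bd_sq hz).shift i) _) ?_
  · linarith
  intro n
  rw [add_zero, BL, norm_mul, norm_inv, Complex.norm_natCast, mul_pow, inv_pow, inv_mul_le_iff₀ (by positivity)]
  calc ‖∑ i ∈ range K, z (n + i)‖ ^ 2 ≤ (∑ i ∈ range K, ‖z (n + i)‖) ^ 2 := by
        gcongr; exact norm_sum_le _ _
    _ ≤ (range K).card * ∑ i ∈ range K, ‖z (n + i)‖ ^ 2 := sq_sum_le_card_mul_sum_sq
    _ = _ := by rw [card_range]; field_simp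

lemma star (hm : IsMean m) {b z : ℕ → ℂ} (hb : ∀ n, ‖b n‖ ≤ 1) (hz : ∀ n, ‖z n‖ ≤ 1)
    {K : ℕ} (hK : 1 ≤ K) {η : ℝ} (h : ∀ n, ‖BL K z n - BL K b n‖ ≤ η) :
    FA K (fun d => m (fun n => (del d b n).re)) ≤ m (fun n => ‖z n‖ ^ 2) + 2 * η := by
  rw [hm.FA_eq hb]
  have := hm.mono (2 * η) (fun n => ‖BL K b n‖ ^ 2) (fun n => ‖BL K z n‖ ^ 2)
    (bd_sq (BL_bd hb K)) (bd_sq (BL_bd hz K)) ?_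
  · linarith [hm.sq_avg hz hK]
  intro n
  have h1 : ‖BL K b n‖ ≤ ‖BL K z n‖ + η := by
    have := norm_sub_norm_le (BL K b n) (BL K z n)
    rw [norm_sub_rev] at this
    linarith [h n]
  have h2 := BL_bd hz K n
  have h3 := BL_bd hb K n
  have h4 : 0 ≤ η := (norm_nonneg _).trans (h n)
  nlinarith [norm_nonneg (BL K b n), norm_nonneg (BL K z n)]

lemma UA_eq (hm : IsMean m) {b : ℕ → ℂ} (hb : ∀ n, ‖b n‖ ≤ 1) (H : ℕ) :
    UA H (fun d => m (fun n => (del d b n).re)) =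
      m (fun n => (b n * (starRingEnd ℂ) (BL H b (n + 1))).re) := by
  have hB : ∀ d, Bd (fun n => (del d b n).re) := fun d => bd_re (del_bd hb d)
  rw [UA, ← hm.sum _ (fun d n => (del (d + 1) b n).re) (fun d => hB _),
    ← hm.smul _ _ (Bd.sum fun d => hB _)]
  congr 1; funext n
  rw [← Complex.re_sum]
  have : (H:ℂ)⁻¹ = (((H:ℝ)⁻¹ : ℝ) : ℂ) := by push_cast; rfl
  simp only [BL, del, map_mul, map_sum, ← Finset.mul_sum]
  rw [this, Complex.conj_ofReal, mul_left_comm, Complex.re_ofReal_mul]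
  congr 4; funext i; congr 2; ring

lemma cross (hm : IsMean m) {b : ℕ → ℂ} (hb : ∀ n, ‖b n‖ ≤ 1) {L : ℕ} (hL : 1 ≤ L) (H : ℕ) :
    |m (fun n => (b n * (starRingEnd ℂ) (BL H b (n + 1))).re) -
      m (fun n => (BL L b n * (starRingEnd ℂ) (BL H b (n + 1))).re)| ≤ 2 * L / H := by
  have hL' : (0:ℝ) < L := by exact_mod_cast hL
  set V : ℕ → ℂ := fun n => BL H b (n + 1) with hV
  have hVb : ∀ n, ‖V n‖ ≤ 1 := fun n => BL_bd hb H _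
  have hB : ∀ i, Bd (fun n => (b (n + i) * (starRingEnd ℂ) (V n)).re) := fun i =>
    bd_re (mul_bd (f := fun n => b (n + i)) (fun n => hb _) hVb)
  have hB0 : Bd (fun n => (b n * (starRingEnd ℂ) (V n)).re) := bd_re (mul_bd hb hVb)
  have h1 : m (fun n => (BL L b n * (starRingEnd ℂ) (V n)).re) =
      (L:ℝ)⁻¹ * ∑ i ∈ range L, m (fun n => (b (n + i) * (starRingEnd ℂ) (V n)).re) := by
    rw [← hm.sum _ (fun i n => (b (n + i) * (starRingEnd ℂ) (V n)).re) hB,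
      ← hm.smul _ _ (Bd.sum hB)]
    congr 1; funext n
    have : (L:ℂ)⁻¹ = (((L:ℝ)⁻¹ : ℝ) : ℂ) := by push_cast; rfl
    rw [← Complex.re_sum, BL, mul_assoc, this, Complex.re_ofReal_mul, Finset.sum_mul]
  have h2 : m (fun n => (b n * (starRingEnd ℂ) (V n)).re) =
      (L:ℝ)⁻¹ * ∑ i ∈ range L, m (fun n => (b n * (starRingEnd ℂ) (V n)).re) := by
    simp; field_simp
  change |m (fun n => (b n * (starRingEnd ℂ) (V n)).re) -
    m (fun n => (BL L b n * (starRingEnd ℂ) (V n)).re)| ≤ _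
  rw [h1, h2, ← mul_sub, ← Finset.sum_sub_distrib, abs_mul, abs_of_pos (by positivity), inv_mul_le_iff₀ hL']
  refine (Finset.abs_sum_le_sum_abs _ _).trans ?_
  calc _ ≤ ∑ i ∈ range L, (2 * (L:ℝ) / H) := Finset.sum_le_sum fun i hi => ?_
    _ = _ := by simp
  have hbase := hm.shiftk _ hB0 i
  have hpt : ∀ n, |(b (n + i) * (starRingEnd ℂ) (V (n + i))).re -
      (b (n + i) * (starRingEnd ℂ) (V n)).re| ≤ 2 * (L:ℝ) / H := by
    intro n
    rw [← Complex.sub_re, ← mul_sub, ← map_sub]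
    refine (Complex.abs_re_le_norm _).trans ?_
    rw [norm_mul, RCLike.norm_conj]
    have h3 : ‖V (n + i) - V n‖ ≤ 2 * (L:ℝ) / H := by
      have := BL_shift hb H (n + 1) i
      simp only [hV]
      rw [show n + i + 1 = n + 1 + i by ring]
      refine this.trans ?_
      have : (i : ℝ) ≤ L := by exact_mod_cast (Finset.mem_range.1 hi).le
      gcongr
    calc _ ≤ 1 * (2 * (L:ℝ) / H) := by gcongr; exact hb _
      _ = _ := one_mul _
  rw [← hbase, abs_sub_le_iff]
  constructor
  · have := hm.mono (2 * (L:ℝ) / H) _ _ (hB0.shift i) (hB i) (fun n => by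
      linarith [(abs_le.1 (hpt n)).2])
    linarith
  · have := hm.mono (2 * (L:ℝ) / H) _ _ (hB i) (hB0.shift i) (fun n => by
      linarith [(abs_le.1 (hpt n)).1])
    linarith

lemma basic (hm : IsMean m) {b : ℕ → ℂ} (hb : ∀ n, ‖b n‖ ≤ 1) {L H K : ℕ} (hL : 1 ≤ L)
    (hH : 1 ≤ H) (hK : 1 ≤ K) :
    P L H K (4 * (L / H : ℝ) + 8 * ((L + H + 1) / K : ℝ)) (fun d => m (fun n => (del d b n).re)) := by
  set V : ℕ → ℂ := fun n => BL H b (n + 1) with hV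
  have hVb : ∀ n, ‖V n‖ ≤ 1 := fun n => BL_bd hb H _
  have hBb := BL_bd hb L
  have hH' : (0:ℝ) < H := by exact_mod_cast hH
  have hK' : (0:ℝ) < K := by exact_mod_cast hK
  set ψ : ℕ → ℝ := fun d => m (fun n => (del d b n).re) with hψ
  have e1 : FA L ψ = m (fun n => ‖BL L b n‖ ^ 2) := hm.FA_eq hb L
  have e2 : FA H ψ = m (fun n => ‖V n‖ ^ 2) := by
    rw [hm.FA_eq hb H, ← hm.shift _ (bd_sq (BL_bd hb H))]
  have e3 : UA H ψ = m (fun n => (b n * (starRingEnd ℂ) (V n)).re) := hm.UA_eq hb H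
  have e4 := hm.cross hb hL H
  set X := m (fun n => (BL L b n * (starRingEnd ℂ) (V n)).re) with hX
  have e5 : |UA H ψ - X| ≤ 2 * L / H := by rw [e3]; exact e4
  have s1 : ∀ K : ℕ, 1 ≤ K → FA K ψ ≤ FA L ψ + 2 * (2 * L / K) := by
    intro K hK
    rw [e1]
    exact hm.star hb hBb hK (fun n => BL_BL hb hL K n)
  set z : ℕ → ℂ := fun n => (1/2 : ℂ) * (BL L b n + V n) with hz
  have hzb : ∀ n, ‖z n‖ ≤ 1 := by
    intro n
    have := norm_add_le (BL L b n) (V n)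
    simp only [hz, norm_mul]
    norm_num
    linarith [hBb n, hVb n]
  have ez : m (fun n => ‖z n‖ ^ 2) = (1/4) * FA L ψ + ((1/4) * FA H ψ + (1/2) * X) := by
    rw [e1, e2, hX]
    have c1 := (bd_sq hBb)
    have c2 := (bd_sq hVb)
    have c3 := bd_re (mul_bd hBb hVb)
    have c4 : Bd (fun n => (1/4) * ‖V n‖ ^ 2 + (1/2) * (BL L b n * (starRingEnd ℂ) (V n)).re) := by
      obtain ⟨C, hC⟩ := c2.smul (1/4)
      obtain ⟨D, hD⟩ := c3.smul (1/2)
      exact ⟨C + D, fun n => (abs_add_le _ _).trans (add_le_add (hC n) (hD n))⟩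
    rw [← hm.smul _ _ c1, ← hm.smul _ _ c2, ← hm.smul _ _ c3, ← hm.add _ _ (c2.smul _) (c3.smul _),
      ← hm.add _ _ (c1.smul _) c4]
    congr 1; funext n
    simp only [hz, ← Complex.normSq_eq_norm_sq, Complex.normSq_mul, Complex.normSq_add]
    norm_num [Complex.normSq]
    ring
  have hzK : ∀ n, ‖BL K z n - BL K b n‖ ≤ 2 * ((L + H + 1) / K : ℝ) := by
    intro n
    have q1 := BL_BL hb hL K n
    have q2 := BL_BL hb hH K (n + 1)
    have q3 := BL_shift1 hb K n
    have : BL K z n - BL K b n = (1/2 : ℂ) * ((BL K (BL L b) n - BL K b n) +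
        ((BL K (BL H b) (n + 1) - BL K b (n + 1)) + (BL K b (n + 1) - BL K b n))) := by
      have : BL K z n = (1/2 : ℂ) * (BL K (BL L b) n + BL K (BL H b) (n + 1)) := by
        have hBL : ∀ f n, BL K f n = (K:ℂ)⁻¹ * ∑ i ∈ range K, f (n + i) := fun _ _ => rfl
        rw [hBL, hBL, hBL]
        simp only [hz, hV]
        rw [← mul_add, ← Finset.sum_add_distrib, mul_left_comm, ← Finset.mul_sum]
        congr 2
        refine Finset.sum_congr rfl fun i _ => ?_
        rw [show n + i + 1 = n + 1 + i by ring]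
      rw [this]; ring
    rw [this, norm_mul]
    have r1 := norm_add_le (BL K (BL L b) n - BL K b n)
        ((BL K (BL H b) (n + 1) - BL K b (n + 1)) + (BL K b (n + 1) - BL K b n))
    have r2 := norm_add_le (BL K (BL H b) (n + 1) - BL K b (n + 1)) (BL K b (n + 1) - BL K b n)
    have r3 : 2 * ((L + H + 1) / K : ℝ) = 2 * L / K + (2 * H / K + 2 / K) := by ring
    rw [r3, show ‖(1/2 : ℂ)‖ = 1/2 by norm_num]
    have : 0 ≤ (2 * (L:ℝ) / K + (2 * H / K + 2 / K)) := by positivity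
    linarith
  have s2 := hm.star hb hzb hK hzK
  rw [ez] at s2
  change FA K ψ ≤ _ at s2
  have s3 := s1 H hH
  have s4 := s1 K hK
  obtain ⟨e6, e7⟩ := abs_le.1 e5
  have p1 : (0:ℝ) ≤ L / H := by positivity
  have p2 : (0:ℝ) ≤ (L + H + 1) / K := by positivity
  have p3 : (L:ℝ) / K ≤ (L + H + 1) / K := by gcongr; linarith
  have p4 : 2 * (L:ℝ) / H = 2 * (L / H) := by ring
  have p5 : 2 * (L:ℝ) / K = 2 * (L / K) := by ring
  rw [p4] at s3 e6 e7
  rw [p5] at s4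
  -- Cauchy-Schwarz
  have cs : X ≤ (1/2) * FA L ψ + (1/2) * FA H ψ := by
    rw [e1, e2, ← hm.smul _ _ (bd_sq hBb), ← hm.smul _ _ (bd_sq hVb),
      ← hm.add _ _ ((bd_sq hBb).smul _) ((bd_sq hVb).smul _)]
    have := hm.mono 0 (fun n => (BL L b n * (starRingEnd ℂ) (V n)).re)
      (fun n => 1/2 * ‖BL L b n‖ ^ 2 + 1/2 * ‖V n‖ ^ 2) (bd_re (mul_bd hBb hVb)) ?_ ?_
    · linarith
    · obtain ⟨C, hC⟩ := (bd_sq hBb).smul (1/2)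
      obtain ⟨D, hD⟩ := (bd_sq hVb).smul (1/2)
      exact ⟨C + D, fun n => (abs_add_le _ _).trans (add_le_add (hC n) (hD n))⟩
    · intro n
      have h1 := Complex.re_le_norm (BL L b n * (starRingEnd ℂ) (V n))
      rw [norm_mul, RCLike.norm_conj] at h1
      nlinarith [sq_nonneg (‖BL L b n‖ - ‖V n‖)]
  refine ⟨by linarith, by linarith, by linarith⟩

end IsMean


lemma cube_cons {s : ℕ} (b : ℕ → ℂ) (d : ℕ) (h : Fin s → ℕ) (n : ℕ) :
    cubeProd b (Fin.cons d h : Fin (s + 1) → ℕ) n = cubeProd (del d b) h n := by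
  unfold cubeProd
  rw [← (Fin.consEquiv (fun _ : Fin (s + 1) => Bool)).prod_comp, Fintype.prod_prod_type,
    Fintype.prod_bool, mul_comm, ← Finset.prod_mul_distrib]
  refine Finset.prod_congr rfl fun ε _ => ?_
  have h1 : ∀ e : Bool, epsDot ((Fin.consEquiv (fun _ : Fin (s + 1) => Bool)) (e, ε))
      (Fin.cons d h : Fin (s + 1) → ℕ) = (if e then d else 0) + epsDot ε h := by
    intro e
    simp [epsDot, Fin.sum_univ_succ, Fin.consEquiv]
  have h2 : ∀ e : Bool, (Finset.univ.filter fun j =>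
      (Fin.consEquiv (fun _ : Fin (s + 1) => Bool)) (e, ε) j = true).card =
      (if e then 1 else 0) + (Finset.univ.filter fun j => ε j = true).card := by
    intro e
    rw [Finset.card_filter, Finset.card_filter, Fin.sum_univ_succ]
    simp [Fin.consEquiv]
  rw [h1, h1, h2, h2]
  generalize (Finset.univ.filter fun j => ε j = true).card = c
  simp only [del]
  have e : n + (d + epsDot ε h) = n + epsDot ε h + d := by ring
  rcases Nat.mod_two_eq_zero_or_one c with hc | hc
  · have : (1 + c) % 2 = 1 := by omega
    simp [hc, this, e]
  · have : (1 + c) % 2 = 0 := by omega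
    simp [hc, this, e]

lemma Q_UA_eq (m : (ℕ → ℝ) → ℝ) (H s : ℕ) : ∀ b : ℕ → ℂ, Q m (UA H) s b = ((H:ℝ) ^ s)⁻¹ *
    ∑ h ∈ Fintype.piFinset (fun _ : Fin s => Finset.Icc 1 H), m (fun n => (cubeProd b h n).re) := by
  induction s with
  | zero =>
    intro b
    simp [Q, cubeProd, epsDot]
  | succ s ih =>
    intro b
    simp only [Q, UA, ih]
    rw [← Finset.mul_sum, ← mul_assoc, pow_succ', mul_inv]
    congr 1
    have : ∀ g : ℕ → ℝ, ∑ d ∈ range H, g (d + 1) = ∑ d ∈ Finset.Icc 1 H, g d := by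
      intro g
      rw [Finset.range_eq_Ico, Finset.sum_Ico_add' g 0 H 1]
      rfl
    rw [this (fun d => ∑ h ∈ Fintype.piFinset (fun _ : Fin s => Finset.Icc 1 H),
      m (fun n => (cubeProd (del d b) h n).re)), ← Finset.sum_product']
    refine Finset.sum_nbij' (fun p => (Fin.cons p.1 p.2 : Fin (s + 1) → ℕ))
      (fun h => (h 0, Fin.tail h)) ?_ ?_ ?_ ?_ ?_
    · rintro ⟨d, h⟩ hp
      simp only [Finset.mem_product, Fintype.mem_piFinset] at hp ⊢
      intro i
      refine Fin.cases ?_ (fun j => ?_) i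
      · simpa using hp.1
      · simpa using hp.2 j
    · intro h hp
      simp only [Finset.mem_product, Fintype.mem_piFinset] at hp ⊢
      exact ⟨hp 0, fun j => hp j.succ⟩
    · rintro ⟨d, h⟩ _
      simp
    · intro h _
      simp
    · rintro ⟨d, h⟩ _
      simp only [cube_cons]

lemma Q_shift {m : (ℕ → ℝ) → ℝ} (hm : IsMean m) (E : (ℕ → ℝ) → ℝ) (s k : ℕ) :
    ∀ b : ℕ → ℂ, (∀ n, ‖b n‖ ≤ 1) → Q m E s (fun n => b (n + k)) = Q m E s b := by
  induction s with
  | zero => intro b hb; exact hm.shiftk _ (bd_re hb) k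
  | succ s ih =>
    intro b hb
    simp only [Q]
    congr 1; funext d
    rw [← ih _ (del_bd hb d)]
    congr 1; funext n
    simp only [del]
    rw [show n + d + k = n + k + d by ring]

lemma Q_conj {m : (ℕ → ℝ) → ℝ} (E : (ℕ → ℝ) → ℝ) (s : ℕ) :
    ∀ b : ℕ → ℂ, Q m E s (fun n => (starRingEnd ℂ) (b n)) = Q m E s b := by
  induction s with
  | zero => intro b; simp [Q]
  | succ s ih =>
    intro b
    simp only [Q]
    congr 1; funext d
    rw [← ih]
    congr 1; funext n
    simp [del]

lemma Q_corr {m : (ℕ → ℝ) → ℝ} (hm : IsMean m) (E : (ℕ → ℝ) → ℝ) (s : ℕ) {b : ℕ → ℂ}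
    (hb : ∀ n, ‖b n‖ ≤ 1) (i j : ℕ) :
    Q m E s (fun n => b (n + i) * (starRingEnd ℂ) (b (n + j))) = Q m E s (del (Nat.dist i j) b) := by
  rcases le_total i j with h | h
  · rw [Nat.dist_eq_sub_of_le h, ← Q_shift hm E s i _ (del_bd hb _)]
    congr 1; funext n
    simp only [del]
    rw [show n + i + (j - i) = n + j by omega]
  · rw [Nat.dist_eq_sub_of_le_right h, ← Q_shift hm E s j _ (del_bd hb _), ← Q_conj]
    congr 1; funext n
    simp only [del, map_mul, Complex.conj_conj]
    rw [show n + j + (i - j) = n + i by omega, mul_comm]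

/-- real averages -/
noncomputable def avg (I : ℕ → Finset ℕ) (f : ℕ → ℝ) (N : ℕ) : ℝ :=
  ((I N).card : ℝ)⁻¹ * ∑ n ∈ I N, f n

lemma ulim (U : Ultrafilter ℕ) {x : ℕ → ℝ} {C : ℝ} (h : ∀ n, |x n| ≤ C) :
    ∃ l, Tendsto x U (𝓝 l) := by
  have hc : IsCompact (Set.Icc (-C) C) := isCompact_Icc
  obtain ⟨l, _, hl⟩ := hc.ultrafilter_le_nhds (U.map x) (by
    rw [le_principal_iff]
    exact Filter.mem_map.2 (Filter.univ_mem' fun n => abs_le.1 (h n)))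
  exact ⟨l, hl⟩

lemma avg_bd (I : ℕ → Finset ℕ) {f : ℕ → ℝ} {C : ℝ} (h : ∀ n, |f n| ≤ C) (N : ℕ) :
    |avg I f N| ≤ C := by
  have hC : 0 ≤ C := (abs_nonneg _).trans (h 0)
  rw [avg, abs_mul, abs_of_nonneg (by positivity)]
  rcases Nat.eq_zero_or_pos (I N).card with h0 | h0
  · simpa [h0] using hC
  · rw [inv_mul_le_iff₀ (by exact_mod_cast h0)]
    calc _ ≤ ∑ n ∈ I N, |f n| := Finset.abs_sum_le_sum_abs _ _
      _ ≤ ∑ n ∈ I N, C := Finset.sum_le_sum fun i _ => h i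
      _ = _ := by simp

/-- ultrafilter mean -/
noncomputable def um (U : Ultrafilter ℕ) (I : ℕ → Finset ℕ) (f : ℕ → ℝ) : ℝ :=
  limUnder (U : Filter ℕ) (avg I f)

lemma um_tendsto (U : Ultrafilter ℕ) (I : ℕ → Finset ℕ) {f : ℕ → ℝ} (hf : Bd f) :
    Tendsto (avg I f) U (𝓝 (um U I f)) := by
  obtain ⟨C, hC⟩ := hf
  exact tendsto_nhds_limUnder (ulim U (avg_bd I hC))

lemma sum_Icc_range {M : Type*} [AddCommMonoid M] (lo hi : ℕ) (f : ℕ → M) :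
    ∑ n ∈ Finset.Icc lo hi, f n = ∑ k ∈ range (Finset.Icc lo hi).card, f (lo + k) := by
  rw [Nat.card_Icc]
  exact Finset.sum_Ico_eq_sum_range f lo (hi + 1)

lemma um_isMean (U : Ultrafilter ℕ) (hU : (U : Filter ℕ) ≤ atTop) (lo hi : ℕ → ℕ) (I : ℕ → Finset ℕ)
    (hI : ∀ N, I N = Finset.Icc (lo N) (hi N))
    (hIcard : Tendsto (fun N => (I N).card) atTop atTop) : IsMean (um U I) where
  add f g hf hg := by
    have h1 := (um_tendsto U I hf).add (um_tendsto U I hg)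
    refine Tendsto.limUnder_eq (h1.congr fun N => ?_)
    simp only [avg, Finset.sum_add_distrib, mul_add]
  smul c f hf := by
    have h1 := (um_tendsto U I hf).const_mul c
    refine Tendsto.limUnder_eq (h1.congr fun N => ?_)
    simp only [avg, ← Finset.mul_sum]; ring
  mono c f g hf hg h := by
    refine le_of_tendsto_of_tendsto (um_tendsto U I hf) ((um_tendsto U I hg).add_const c) ?_
    have : ∀ᶠ N in (U : Filter ℕ), 1 ≤ (I N).card := hU (hIcard.eventually_ge_atTop 1)
    filter_upwards [this] with N hN
    have hN' : (0:ℝ) < (I N).card := by exact_mod_cast hN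
    have : c = ((I N).card : ℝ)⁻¹ * ∑ n ∈ I N, c := by
      rw [Finset.sum_const, nsmul_eq_mul]; field_simp
    change avg I f N ≤ avg I g N + c
    have key : ((I N).card : ℝ)⁻¹ * ∑ n ∈ I N, f n ≤ ((I N).card : ℝ)⁻¹ * ∑ n ∈ I N, (g n + c) :=
      mul_le_mul_of_nonneg_left (Finset.sum_le_sum fun n _ => h n) (inv_nonneg.2 hN'.le)
    rw [Finset.sum_add_distrib, mul_add, ← this] at key
    exact key
  shift f hf := by
    refine Tendsto.limUnder_eq ?_
    have h1 := um_tendsto U I hf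
    obtain ⟨C, hC⟩ := hf
    have h2 : Tendsto (fun N => avg I (fun n => f (n + 1)) N - avg I f N) U (𝓝 0) := by
      have h3 : Tendsto (fun N => (2 * C) * ((I N).card : ℝ)⁻¹) U (𝓝 0) := by
        have : Tendsto (fun N => ((I N).card : ℝ)⁻¹) U (𝓝 0) :=
          (tendsto_inv_atTop_zero.comp (tendsto_natCast_atTop_atTop.comp hIcard)).mono_left hU
        simpa using this.const_mul (2 * C)
      refine squeeze_zero_norm (fun N => ?_) h3
      simp only [avg]
      rw [← mul_sub, ← Finset.sum_sub_distrib, hI N, sum_Icc_range]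
      have : ∑ k ∈ range (Finset.Icc (lo N) (hi N)).card, (f (lo N + k + 1) - f (lo N + k)) =
        f (lo N + (Finset.Icc (lo N) (hi N)).card) - f (lo N) := by
        have := Finset.sum_range_sub (fun i => f (lo N + i)) (Finset.Icc (lo N) (hi N)).card
        simpa [add_assoc] using this
      rw [this, Real.norm_eq_abs, abs_mul, abs_of_nonneg (by positivity), mul_comm]
      gcongr
      refine (abs_sub _ _).trans ?_
      linarith [hC (lo N + (Finset.Icc (lo N) (hi N)).card), hC (lo N)]
    have := h1.add h2
    simpa using this

lemma scalar_vdc (lo c : ℕ) (hc : 1 ≤ c) {L : ℕ} (hL : 1 ≤ L) {r : ℕ → ℂ} (hr : ∀ n, ‖r n‖ ≤ 1) :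
    ‖BL c r lo‖ ^ 2 ≤ ((L : ℝ) ^ 2)⁻¹ * ∑ i ∈ range L, ∑ j ∈ range L,
      (c : ℝ)⁻¹ * ∑ k ∈ range c, (r (lo + k + i) * (starRingEnd ℂ) (r (lo + k + j))).re
      + 4 * L / c := by
  have hc' : (0:ℝ) < c := by exact_mod_cast hc
  have h1 := BL_BL hr hL c lo
  have h2 : ‖BL c r lo‖ ^ 2 ≤ ‖BL c (BL L r) lo‖ ^ 2 + 2 * (2 * L / c) := by
    have h1' : ‖BL c r lo‖ ≤ ‖BL c (BL L r) lo‖ + 2 * L / c := by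
      have := norm_sub_norm_le (BL c r lo) (BL c (BL L r) lo)
      rw [norm_sub_rev] at this
      linarith
    have h2 := BL_bd hr c lo
    have h3 := BL_bd (BL_bd hr L) c lo
    have h4 : 0 ≤ 2 * (L:ℝ) / c := by positivity
    nlinarith [norm_nonneg (BL c r lo), norm_nonneg (BL c (BL L r) lo)]
  have h3 : ‖BL c (BL L r) lo‖ ^ 2 ≤ (c:ℝ)⁻¹ * ∑ k ∈ range c, ‖BL L r (lo + k)‖ ^ 2 := by
    rw [BL, norm_mul, norm_inv, Complex.norm_natCast, mul_pow, inv_pow, inv_mul_le_iff₀ (by positivity)]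
    calc ‖∑ i ∈ range c, BL L r (lo + i)‖ ^ 2 ≤ (∑ i ∈ range c, ‖BL L r (lo + i)‖) ^ 2 := by
          gcongr; exact norm_sum_le _ _
      _ ≤ (range c).card * ∑ i ∈ range c, ‖BL L r (lo + i)‖ ^ 2 := sq_sum_le_card_mul_sum_sq
      _ = _ := by rw [card_range]; field_simp
  have h4 : (c:ℝ)⁻¹ * ∑ k ∈ range c, ‖BL L r (lo + k)‖ ^ 2 =
      ((L : ℝ) ^ 2)⁻¹ * ∑ i ∈ range L, ∑ j ∈ range L,
      (c : ℝ)⁻¹ * ∑ k ∈ range c, (r (lo + k + i) * (starRingEnd ℂ) (r (lo + k + j))).re := by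
    simp only [BL, normsq_avg]
    simp only [Finset.mul_sum]
    rw [Finset.sum_comm]
    refine Finset.sum_congr rfl fun x _ => ?_
    rw [Finset.sum_comm]
    refine Finset.sum_congr rfl fun y _ => Finset.sum_congr rfl fun z _ => by ring
  rw [← h4]
  have : 2 * (2 * (L:ℝ) / c) = 4 * L / c := by ring
  linarith


section System

variable {Y : Type} [MeasurableSpace Y]

lemma zpow_meas {T : Equiv.Perm Y} (h1 : Measurable T) (h2 : Measurable (T.symm : Y → Y)) (z : ℤ) :
    Measurable ((T ^ z : Equiv.Perm Y) : Y → Y) := by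
  have hn : ∀ n : ℕ, Measurable ((T ^ n : Equiv.Perm Y) : Y → Y) := by
    intro n
    induction n with
    | zero => simpa using measurable_id
    | succ n ih => rw [pow_succ]; exact ih.comp h1
  have hn' : ∀ n : ℕ, Measurable (((T⁻¹) ^ n : Equiv.Perm Y) : Y → Y) := by
    intro n
    induction n with
    | zero => simpa using measurable_id
    | succ n ih => rw [pow_succ]; exact ih.comp h2
  cases z with
  | ofNat n => simpa using hn n
  | negSucc n => rw [zpow_negSucc, ← inv_pow]; exact hn' _

/-- the power of a transformation as a measurable equivalence -/
def zpowEquiv {T : Equiv.Perm Y} (h1 : Measurable T) (h2 : Measurable (T.symm : Y → Y)) (z : ℤ) :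
    Y ≃ᵐ Y where
  toEquiv := T ^ z
  measurable_toFun := zpow_meas h1 h2 z
  measurable_invFun := by
    have := zpow_meas h1 h2 (-z)
    rw [zpow_neg] at this
    exact this

lemma zpow_mp {μ : Measure Y} {T : Equiv.Perm Y} (hT : MeasurePreserving T μ μ)
    (h2 : Measurable (T.symm : Y → Y)) (z : ℤ) :
    MeasurePreserving ((T ^ z : Equiv.Perm Y) : Y → Y) μ μ := by
  have hn : ∀ n : ℕ, MeasurePreserving ((T ^ n : Equiv.Perm Y) : Y → Y) μ μ := by
    intro n
    induction n with
    | zero => simpa using MeasurePreserving.id μ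
    | succ n ih => rw [pow_succ]; exact ih.comp hT
  cases z with
  | ofNat n => simpa using hn n
  | negSucc n =>
    have := MeasurePreserving.symm (zpowEquiv hT.measurable h2 ((n + 1 : ℕ) : ℤ))
      (show MeasurePreserving ((T ^ ((n + 1 : ℕ) : ℤ) : Equiv.Perm Y) : Y → Y) μ μ by
        rw [zpow_natCast]; exact hn _)
    rw [zpow_negSucc, ← zpow_natCast]
    exact this

lemma integral_zpow {μ : Measure Y} {T : Equiv.Perm Y} (hT : MeasurePreserving T μ μ)
    (h2 : Measurable (T.symm : Y → Y)) (z : ℤ) (g : Y → ℂ) :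
    ∫ x, g ((T ^ z) x) ∂μ = ∫ x, g x ∂μ :=
  MeasurePreserving.integral_comp (zpow_mp hT h2 z)
    (zpowEquiv hT.measurable h2 z).measurableEmbedding g

/-- the weighted averages -/
noncomputable def W (μ : Measure Y) (T : Equiv.Perm Y) (lo c : ℕ) {s : ℕ} (b : ℕ → ℂ)
    (F : Fin s → Y → ℂ) (k : Fin s → ℤ) : ℂ :=
  (c : ℂ)⁻¹ * ∑ n ∈ range c, b (lo + n) * ∫ x, (∏ i, F i ((T ^ (k i * ((lo + n : ℕ) : ℤ))) x)) ∂μ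

lemma prod_bd {s : ℕ} {f : Fin s → ℂ} (h : ∀ i, ‖f i‖ ≤ 1) : ‖∏ i, f i‖ ≤ 1 := by
  rw [norm_prod]
  exact Finset.prod_le_one (fun _ _ => norm_nonneg _) (fun i _ => h i)

lemma W_bd (μ : Measure Y) [IsProbabilityMeasure μ] (T : Equiv.Perm Y) (lo c : ℕ) {s : ℕ} {b : ℕ → ℂ}
    {F : Fin s → Y → ℂ} (k : Fin s → ℤ) (hb : ∀ n, ‖b n‖ ≤ 1) (hF : ∀ i x, ‖F i x‖ ≤ 1) :
    ‖W μ T lo c b F k‖ ≤ 1 := by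
  apply avg_norm_le zero_le_one
  intro n _
  rw [norm_mul]
  refine mul_le_one₀ (hb _) (norm_nonneg _) ?_
  have := norm_integral_le_of_norm_le_const (μ := μ) (C := 1)
    (f := fun x => ∏ i, F i ((T ^ (k i * ((lo + n : ℕ) : ℤ))) x))
    (Filter.Eventually.of_forall fun x => prod_bd fun i => hF i _)
  simpa using this

lemma integrable_of_bd {μ : Measure Y} [IsProbabilityMeasure μ] {E : Type*} [NormedAddCommGroup E]
    [MeasurableSpace E] [BorelSpace E] [SecondCountableTopology E]
    {f : Y → E} (hf : Measurable f) {C : ℝ} (h : ∀ x, ‖f x‖ ≤ C) : Integrable f μ :=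
  Integrable.of_bound hf.aestronglyMeasurable C (Filter.Eventually.of_forall h)

lemma sq_integral_le (μ : Measure Y) [IsProbabilityMeasure μ] {f : Y → ℝ} (hf : Measurable f)
    (h : ∀ x, ‖f x‖ ≤ 1) : (∫ x, f x ∂μ) ^ 2 ≤ ∫ x, f x ^ 2 ∂μ := by
  have i1 : Integrable f μ := integrable_of_bd hf h
  have i2 : Integrable (fun x => f x ^ 2) μ := integrable_of_bd (hf.pow_const 2) (C := 1) (fun x => by
    rw [norm_pow]; exact pow_le_one₀ (norm_nonneg _) (h x))
  set t := ∫ x, f x ∂μ with ht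
  have h0 : 0 ≤ ∫ x, (f x ^ 2 - (2 * t) * f x + t ^ 2) ∂μ :=
    integral_nonneg fun x => by
      change 0 ≤ f x ^ 2 - (2 * t) * f x + t ^ 2
      nlinarith [sq_nonneg (f x - t)]
  have i3 : Integrable (fun x => f x ^ 2 - (2 * t) * f x) μ := i2.sub (i1.const_mul _)
  rw [integral_add i3 (integrable_const _), integral_sub i2 (i1.const_mul _),
    integral_const_mul, integral_const, ← ht] at h0
  simp at h0
  nlinarith

/-- new exponents -/
def kk {s : ℕ} (k : Fin (s + 1) → ℤ) : Fin s → ℤ := fun l => k l.succ - k 0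

/-- new functions -/
noncomputable def FF (T : Equiv.Perm Y) {s : ℕ} (F : Fin (s + 1) → Y → ℂ) (k : Fin (s + 1) → ℤ) (i j : ℕ) :
    Fin s → Y → ℂ := fun l x =>
  F l.succ ((T ^ (kk k l * (i : ℤ))) x) * (starRingEnd ℂ) (F l.succ ((T ^ (kk k l * (j : ℤ))) x))

lemma FF_bd (T : Equiv.Perm Y) {s : ℕ} {F : Fin (s + 1) → Y → ℂ} (hF : ∀ i x, ‖F i x‖ ≤ 1)
    (k : Fin (s + 1) → ℤ) (i j : ℕ) (l : Fin s) (x : Y) : ‖FF T F k i j l x‖ ≤ 1 := by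
  simp only [FF, norm_mul, RCLike.norm_conj]
  exact mul_le_one₀ (hF _ _) (norm_nonneg _) (hF _ _)

lemma FF_meas {T : Equiv.Perm Y} (h1 : Measurable T) (h2 : Measurable (T.symm : Y → Y)) {s : ℕ}
    {F : Fin (s + 1) → Y → ℂ} (hF : ∀ i, Measurable (F i))
    (k : Fin (s + 1) → ℤ) (i j : ℕ) (l : Fin s) : Measurable (FF T F k i j l) := by
  unfold FF
  refine ((hF _).comp (zpow_meas h1 h2 _)).mul ?_
  exact Complex.continuous_conj.measurable.comp ((hF _).comp (zpow_meas h1 h2 _))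

lemma vdc_step (μ : Measure Y) [IsProbabilityMeasure μ] {T : Equiv.Perm Y}
    (hT : MeasurePreserving T μ μ) (h2 : Measurable (T.symm : Y → Y))
    (lo c : ℕ) (hc : 1 ≤ c) {L : ℕ} (hL : 1 ≤ L) {s : ℕ} {b : ℕ → ℂ} {F : Fin (s + 1) → Y → ℂ}
    (k : Fin (s + 1) → ℤ) (hb : ∀ n, ‖b n‖ ≤ 1) (hF : ∀ i x, ‖F i x‖ ≤ 1)
    (hFm : ∀ i, Measurable (F i)) :
    ‖W μ T lo c b F k‖ ^ 2 ≤ ((L : ℝ) ^ 2)⁻¹ * ∑ i ∈ range L, ∑ j ∈ range L,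
      (W μ T lo c (fun n => b (n + i) * (starRingEnd ℂ) (b (n + j))) (FF T F k i j) (kk k)).re
      + 4 * L / c := by
  have h1 := hT.measurable
  set r : Y → ℕ → ℂ := fun x n => b n * ∏ l : Fin s, F l.succ ((T ^ (kk k l * (n : ℤ))) x) with hr
  have hrb : ∀ x n, ‖r x n‖ ≤ 1 := by
    intro x n
    simp only [hr, norm_mul]
    exact mul_le_one₀ (hb _) (norm_nonneg _) (prod_bd fun l => hF _ _)
  have hrm : ∀ n, Measurable (fun x => r x n) := by
    intro n
    simp only [hr]
    refine measurable_const.mul ?_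
    exact Finset.measurable_prod _ fun l _ => (hFm _).comp (zpow_meas h1 h2 _)
  have hBm : Measurable (fun x => BL c (r x) lo) := by
    unfold BL
    exact measurable_const.mul (Finset.measurable_sum _ fun n _ => hrm _)
  -- step 1
  have e1 : W μ T lo c b F k = ∫ x, F 0 x * BL c (r x) lo ∂μ := by
    have q : ∀ n : ℕ, b (lo + n) * ∫ x, (∏ i, F i ((T ^ (k i * ((lo + n : ℕ) : ℤ))) x)) ∂μ =
        ∫ x, F 0 x * r x (lo + n) ∂μ := by
      intro n
      rw [← integral_zpow hT h2 (k 0 * ((lo + n : ℕ) : ℤ)) (fun x => F 0 x * r x (lo + n)),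
        ← integral_const_mul]
      congr 1; funext x
      rw [Fin.prod_univ_succ]
      simp only [hr]
      rw [mul_left_comm]
      congr 2
      refine Finset.prod_congr rfl fun l _ => ?_
      rw [← Equiv.Perm.mul_apply, ← zpow_add]
      congr 3
      simp only [kk]; ring
    unfold W
    simp only [q]
    rw [← integral_finsetSum, ← integral_const_mul]
    · congr 1; funext x
      simp only [BL, Finset.mul_sum]
      exact Finset.sum_congr rfl fun n _ => by ring
    · intro n _
      refine integrable_of_bd ((hFm 0).mul (hrm _)) (C := 1) fun x => ?_
      rw [norm_mul]
      exact mul_le_one₀ (hF _ _) (norm_nonneg _) (hrb _ _)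
  have hBb : ∀ x, ‖BL c (r x) lo‖ ≤ 1 := fun x => BL_bd (hrb x) c lo
  have e2 : ‖W μ T lo c b F k‖ ≤ ∫ x, ‖BL c (r x) lo‖ ∂μ := by
    rw [e1]
    refine (norm_integral_le_integral_norm _).trans ?_
    refine integral_mono ?_ ?_ fun x => ?_
    · refine integrable_of_bd ((hFm 0).mul hBm).norm (C := 1) fun x => ?_
      rw [norm_norm, norm_mul]
      exact mul_le_one₀ (hF _ _) (norm_nonneg _) (hBb _)
    · exact integrable_of_bd hBm.norm (C := 1) fun x => by rw [norm_norm]; exact hBb x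
    · change ‖F 0 x * BL c (r x) lo‖ ≤ ‖BL c (r x) lo‖
      rw [norm_mul]
      exact mul_le_of_le_one_left (norm_nonneg _) (hF 0 x)
  have e3 : ‖W μ T lo c b F k‖ ^ 2 ≤ ∫ x, ‖BL c (r x) lo‖ ^ 2 ∂μ := by
    calc _ ≤ (∫ x, ‖BL c (r x) lo‖ ∂μ) ^ 2 := by gcongr
      _ ≤ _ := sq_integral_le μ hBm.norm fun x => by rw [norm_norm]; exact hBb x
  refine e3.trans ?_
  set g : Y → ℕ → ℕ → ℕ → ℂ := fun x i j n => r x (lo + n + i) * (starRingEnd ℂ) (r x (lo + n + j))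
    with hg
  have hgi : ∀ i j n, Integrable (fun x => g x i j n) μ := fun i j n =>
    integrable_of_bd ((hrm _).mul (Complex.continuous_conj.measurable.comp (hrm _))) (C := 1) fun x => by
      rw [norm_mul, RCLike.norm_conj]
      exact mul_le_one₀ (hrb _ _) (norm_nonneg _) (hrb _ _)
  have hgi' : ∀ i j n, Integrable (fun x => (g x i j n).re) μ := fun i j n => (hgi i j n).re
  have hi1 : ∀ i j, Integrable (fun x => (c:ℝ)⁻¹ * ∑ n ∈ range c, (g x i j n).re) μ := fun i j =>
    (integrable_finsetSum _ fun n _ => hgi' i j n).const_mul _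
  have hi2 : ∀ i, Integrable (fun x => ∑ j ∈ range L, (c:ℝ)⁻¹ * ∑ n ∈ range c, (g x i j n).re) μ :=
    fun i => integrable_finsetSum _ fun j _ => hi1 i j
  have hi3 : Integrable (fun x => ((L : ℝ) ^ 2)⁻¹ * ∑ i ∈ range L, ∑ j ∈ range L,
      (c:ℝ)⁻¹ * ∑ n ∈ range c, (g x i j n).re) μ :=
    (integrable_finsetSum _ fun i _ => hi2 i).const_mul _
  have e4 : ∫ x, ‖BL c (r x) lo‖ ^ 2 ∂μ ≤ ∫ x, (((L : ℝ) ^ 2)⁻¹ * ∑ i ∈ range L, ∑ j ∈ range L,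
      (c:ℝ)⁻¹ * ∑ n ∈ range c, (g x i j n).re + 4 * L / c) ∂μ := by
    refine integral_mono ?_ (hi3.add (integrable_const _)) fun x => ?_
    · refine integrable_of_bd (hBm.norm.pow_const 2) (C := 1) fun x => ?_
      rw [norm_pow, norm_norm]
      exact pow_le_one₀ (norm_nonneg _) (hBb x)
    · exact scalar_vdc lo c hc hL (hrb x)
  refine e4.trans (le_of_eq ?_)
  rw [integral_add hi3 (integrable_const _), integral_const_mul, integral_finsetSum _ (fun i _ => hi2 i)]
  congr 1
  · congr 1
    refine Finset.sum_congr rfl fun i _ => ?_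
    rw [integral_finsetSum _ (fun j _ => hi1 i j)]
    refine Finset.sum_congr rfl fun j _ => ?_
    rw [integral_const_mul, integral_finsetSum _ (fun n _ => hgi' i j n)]
    have : (c:ℂ)⁻¹ = (((c:ℝ)⁻¹ : ℝ) : ℂ) := by push_cast; rfl
    rw [W, this, Complex.re_ofReal_mul, Complex.re_sum]
    congr 1
    refine Finset.sum_congr rfl fun n _ => ?_
    have hre : ∫ x, (g x i j n).re ∂μ = (∫ x, g x i j n ∂μ).re := integral_re (hgi i j n)
    rw [hre, ← integral_const_mul]
    congr 2; funext x
    simp only [hg, hr, FF, map_mul, map_prod]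
    rw [Finset.prod_mul_distrib]
    have t : ∀ (i : ℕ) (l : Fin s), (T ^ (kk k l * ((lo + n + i : ℕ) : ℤ))) x =
        (T ^ (kk k l * (i : ℤ))) ((T ^ (kk k l * ((lo + n : ℕ) : ℤ))) x) := by
      intro i l
      rw [← Equiv.Perm.mul_apply, ← zpow_add]
      congr 2; push_cast; ring
    simp only [t]
    ring
  · simp

end System


section Claim

variable {X : ℕ → Type} [mX : ∀ N, MeasurableSpace (X N)] {μ : ∀ N, Measure (X N)}
  [hμ : ∀ N, IsProbabilityMeasure (μ N)] {T : ∀ N, Equiv.Perm (X N)}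

lemma limit_vdc (hT : ∀ N, MeasurePreserving (T N) (μ N) (μ N))
    (hTmeas : ∀ N, Measurable ((T N).symm : X N → X N))
    (U : Ultrafilter ℕ) (hU : (U : Filter ℕ) ≤ atTop) (lo : ℕ → ℕ) (I : ℕ → Finset ℕ)
    (hIcard : Tendsto (fun N => (I N).card) atTop atTop) {L : ℕ} (hL : 1 ≤ L)
    {s : ℕ} {b : ℕ → ℂ} (hb : ∀ n, ‖b n‖ ≤ 1) {F : ∀ N, Fin (s + 1) → X N → ℂ}
    (hFm : ∀ N i, Measurable (F N i)) (hF : ∀ N i x, ‖F N i x‖ ≤ 1) (k : Fin (s + 1) → ℤ)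
    {l : ℝ} (hl : Tendsto (fun N => ‖W (μ N) (T N) (lo N) (I N).card b (F N) k‖) U (𝓝 l))
    {p : ℕ → ℕ → ℝ} {q : ℕ → ℕ → ℕ → ℝ}
    (hq : ∀ i j N, (W (μ N) (T N) (lo N) (I N).card
      (fun n => b (n + i) * (starRingEnd ℂ) (b (n + j))) (FF (T N) (F N) k i j) (kk k)).re ≤ q i j N)
    (hp : ∀ i j, Tendsto (q i j) U (𝓝 (p i j))) :
    l ^ 2 ≤ ((L : ℝ) ^ 2)⁻¹ * ∑ i ∈ range L, ∑ j ∈ range L, p i j := by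
  have h1 : Tendsto (fun N => ((L : ℝ) ^ 2)⁻¹ * ∑ i ∈ range L, ∑ j ∈ range L, q i j N
      + 4 * L / ((I N).card : ℝ)) U
      (𝓝 (((L : ℝ) ^ 2)⁻¹ * ∑ i ∈ range L, ∑ j ∈ range L, p i j + 0)) := by
    refine Tendsto.add (Tendsto.const_mul _ ?_) ?_
    · exact tendsto_finsetSum _ fun i _ => tendsto_finsetSum _ fun j _ => hp i j
    · exact ((tendsto_natCast_atTop_atTop.comp hIcard).const_div_atTop (4 * (L:ℝ))).mono_left hU
  rw [add_zero] at h1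
  refine le_of_tendsto_of_tendsto (hl.pow 2) h1 ?_
  have : ∀ᶠ N in (U : Filter ℕ), 1 ≤ (I N).card := hU (hIcard.eventually_ge_atTop 1)
  filter_upwards [this] with N hN
  refine (vdc_step (μ N) (hT N) (hTmeas N) (lo N) (I N).card hN hL k hb (hF N) (hFm N)).trans ?_
  gcongr with i _ j _
  exact hq i j N

lemma claim (hT : ∀ N, MeasurePreserving (T N) (μ N) (μ N))
    (hTmeas : ∀ N, Measurable ((T N).symm : X N → X N))
    (U : Ultrafilter ℕ) (hU : (U : Filter ℕ) ≤ atTop) (lo hi : ℕ → ℕ) (I : ℕ → Finset ℕ)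
    (hI : ∀ N, I N = Finset.Icc (lo N) (hi N))
    (hIcard : Tendsto (fun N => (I N).card) atTop atTop) {L : ℕ} (hL : 1 ≤ L) (s : ℕ) :
    ∀ (b : ℕ → ℂ) (_ : ∀ n, ‖b n‖ ≤ 1) (F : ∀ N, Fin (s + 1) → X N → ℂ)
    (_ : ∀ N i, Measurable (F N i)) (_ : ∀ N i x, ‖F N i x‖ ≤ 1) (k : Fin (s + 1) → ℤ)
    (l : ℝ) (_ : Tendsto (fun N => ‖W (μ N) (T N) (lo N) (I N).card b (F N) k‖) U (𝓝 l)),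
    l ^ (2 ^ (s + 1)) ≤ Q (um U I) (FA L) (s + 1) b := by
  have hm := um_isMean U hU lo hi I hI hIcard
  have hbb : ∀ b : ℕ → ℂ, (∀ n, ‖b n‖ ≤ 1) → ∀ i j n,
      ‖b (n + i) * (starRingEnd ℂ) (b (n + j))‖ ≤ 1 := by
    intro b hb i j n
    rw [norm_mul, RCLike.norm_conj]
    exact mul_le_one₀ (hb _) (norm_nonneg _) (hb _)
  induction s with
  | zero =>
    intro b hb F hFm hF k l hl
    have := limit_vdc hT hTmeas U hU lo I hIcard hL hb hFm hF k hl
      (q := fun i j => avg I (fun n => (b (n + i) * (starRingEnd ℂ) (b (n + j))).re))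
      (p := fun i j => um U I (fun n => (b (n + i) * (starRingEnd ℂ) (b (n + j))).re))
      (fun i j N => by
        have e : (((I N).card : ℂ))⁻¹ = ((((I N).card : ℝ)⁻¹ : ℝ) : ℂ) := by push_cast; rfl
        rw [W, avg, hI N, sum_Icc_range, ← hI N, e, Complex.re_ofReal_mul, Complex.re_sum]
        simp)
      (fun i j => um_tendsto U I (bd_re (hbb b hb i j)))
    simp only [hm.corr hb] at this
    simpa [Q, FA] using this
  | succ s ih =>
    intro b hb F hFm hF k l hl
    have hex : ∀ i j : ℕ, ∃ l', Tendsto (fun N => ‖W (μ N) (T N) (lo N) (I N).card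
      (fun n => b (n + i) * (starRingEnd ℂ) (b (n + j))) (FF (T N) (F N) k i j) (kk k)‖) U (𝓝 l') := by
      intro i j
      refine ulim U (C := 1) fun N => ?_
      rw [abs_norm]
      exact W_bd _ _ _ _ _ (hbb b hb i j) (FF_bd _ (hF N) k i j)
    choose p hp using hex
    have h1 := limit_vdc hT hTmeas U hU lo I hIcard hL hb hFm hF k hl
      (q := fun i j N => ‖W (μ N) (T N) (lo N) (I N).card
      (fun n => b (n + i) * (starRingEnd ℂ) (b (n + j))) (FF (T N) (F N) k i j) (kk k)‖)
      (p := p) (fun i j N => Complex.re_le_norm _) hp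
    have h2 : ∀ i j, p i j ^ (2 ^ (s + 1)) ≤ Q (um U I) (FA L) (s + 1) (del (Nat.dist i j) b) := by
      intro i j
      rw [← Q_corr hm (FA L) (s + 1) hb i j]
      exact ih _ (hbb b hb i j) (fun N => FF (T N) (F N) k i j)
        (fun N => FF_meas (hT N).measurable (hTmeas N) (hFm N) k i j)
        (fun N => FF_bd _ (hF N) k i j) (kk k) _ (hp i j)
    have hL' : (0:ℝ) < L := by exact_mod_cast hL
    have h3 : (((L : ℝ) ^ 2)⁻¹ * ∑ i ∈ range L, ∑ j ∈ range L, p i j) ^ (2 ^ (s + 1)) ≤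
        ((L : ℝ) ^ 2)⁻¹ * ∑ i ∈ range L, ∑ j ∈ range L, p i j ^ (2 ^ (s + 1)) := by
      have := Real.pow_arith_mean_le_arith_mean_pow_of_even (range L ×ˢ range L)
        (fun _ => ((L : ℝ) ^ 2)⁻¹) (fun x => p x.1 x.2) (fun _ _ => by positivity)
        (by simp; field_simp) (n := 2 ^ (s + 1)) (by rw [pow_succ]; exact even_two.mul_left _)
      rw [← Finset.mul_sum, ← Finset.mul_sum, Finset.sum_product, Finset.sum_product] at this
      exact this
    calc l ^ (2 ^ (s + 1 + 1)) = (l ^ 2) ^ (2 ^ (s + 1)) := by rw [← pow_mul, pow_succ' 2 (s+1)]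
      _ ≤ _ := pow_le_pow_left₀ (sq_nonneg _) h1 _
      _ ≤ _ := h3
      _ ≤ ((L : ℝ) ^ 2)⁻¹ * ∑ i ∈ range L, ∑ j ∈ range L,
          Q (um U I) (FA L) (s + 1) (del (Nat.dist i j) b) := by
        gcongr with i _ j _
        exact h2 i j
      _ = _ := rfl

end Claim

lemma cubeProd_bd {a : ℕ → ℂ} (ha : ∀ n, ‖a n‖ ≤ 1) {s : ℕ} (h : Fin s → ℕ) (n : ℕ) :
    ‖cubeProd a h n‖ ≤ 1 := by
  unfold cubeProd
  rw [norm_prod]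
  refine Finset.prod_le_one (fun _ _ => norm_nonneg _) (fun i _ => ?_)
  split_ifs
  · rw [RCLike.norm_conj]; exact ha _
  · exact ha _

lemma um_cube (U : Ultrafilter ℕ) (hU : (U : Filter ℕ) ≤ atTop) (I : ℕ → Finset ℕ)
    {a : ℕ → ℂ} (ha : ∀ n, ‖a n‖ ≤ 1) {s : ℕ} (h : Fin s → ℕ) {c : ℂ}
    (hc : Tendsto (cesaroAvg I (cubeProd a h)) atTop (𝓝 c)) :
    um U I (fun n => (cubeProd a h n).re) = c.re := by
  refine Tendsto.limUnder_eq ?_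
  have := (Complex.continuous_re.tendsto c).comp (hc.mono_left hU)
  refine this.congr fun N => ?_
  have e : (((I N).card : ℂ))⁻¹ = ((((I N).card : ℝ)⁻¹ : ℝ) : ℂ) := by push_cast; rfl
  simp only [Function.comp, cesaroAvg, avg]
  rw [e, Complex.re_ofReal_mul, Complex.re_sum]

lemma final_bound {m : (ℕ → ℝ) → ℝ} (hm : IsMean m) {a : ℕ → ℂ} (ha : ∀ n, ‖a n‖ ≤ 1) (s : ℕ)
    {v d : ℝ} (hv : Tendsto (fun H : ℕ => Q m (UA H) s a) atTop (𝓝 v))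
    (hd : ∀ L : ℕ, 1 ≤ L → d ≤ Q m (FA L) s a) : d ≤ v := by
  obtain ⟨C, hC⟩ := Q_lower s
  set S : Set ℝ := {x | ∃ L : ℕ, 1 ≤ L ∧ x = Q m (FA L) s a} with hS
  have hne : S.Nonempty := ⟨_, 1, le_rfl, rfl⟩
  have hbd : BddBelow S := ⟨d, by rintro _ ⟨L, hL, rfl⟩; exact hd L hL⟩
  set g := sInf S with hg
  have hdg : d ≤ g := le_csInf hne (by rintro _ ⟨L, hL, rfl⟩; exact hd L hL)
  refine hdg.trans ?_
  have hp : (1:ℝ) ≤ 2 ^ s := one_le_pow₀ (by norm_num)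
  have key : ∀ L : ℕ, 1 ≤ L → 2 ^ s * g ≤ v + (2 ^ s - 1) * Q m (FA L) s a := by
    intro L hL
    have t1 : Tendsto (fun H : ℕ => ((H : ℝ))⁻¹) atTop (𝓝 0) := tendsto_inv_atTop_nhds_zero_nat
    have t2 : Tendsto (fun H : ℕ => 4 * (L / H : ℝ) + 8 * ((L + H + 1) / ((H ^ 2 : ℕ) : ℝ) : ℝ))
        atTop (𝓝 0) := by
      have t3 : Tendsto (fun H : ℕ => 4 * (L * (H:ℝ)⁻¹) + 8 * ((L + 1) * ((H:ℝ)⁻¹ * (H:ℝ)⁻¹) + (H:ℝ)⁻¹))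
          atTop (𝓝 (4 * (L * 0) + 8 * ((L + 1) * (0 * 0) + 0))) :=
        ((t1.const_mul _).const_mul _).add ((((t1.mul t1).const_mul _).add t1).const_mul _)
      simp only [mul_zero, add_zero] at t3
      refine t3.congr' ?_
      filter_upwards [eventually_ge_atTop 1] with H hH
      have : (0:ℝ) < H := by exact_mod_cast hH
      push_cast
      field_simp
      ring
    have t4 := (hv.add_const ((2 ^ s - 1) * Q m (FA L) s a)).add (t2.const_mul C)
    rw [mul_zero, add_zero] at t4
    refine ge_of_tendsto t4 ?_
    filter_upwards [eventually_ge_atTop 1] with H hH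
    have hK : 1 ≤ H ^ 2 := Nat.one_le_pow _ _ hH
    refine le_trans ?_ (hC m L H (H ^ 2) _ hL hH hK (fun b hb => hm.basic hb hL hH hK) a ha)
    have : g ≤ Q m (FA (H ^ 2)) s a := csInf_le hbd ⟨_, hK, rfl⟩
    gcongr
  by_contra hlt
  push Not at hlt
  -- choose L with G_L < g + (g - v) / 2 ^ s
  have h1 : g < g + (g - v) / 2 ^ s := by
    have : 0 < (g - v) / 2 ^ s := div_pos (by linarith) (by positivity)
    linarith
  obtain ⟨_, ⟨L, hL, rfl⟩, h2⟩ := exists_lt_of_csInf_lt hne (hg ▸ h1)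
  have h3 := key L hL
  have h4 : (2 ^ s - 1) * Q m (FA L) s a ≤ (2 ^ s - 1) * (g + (g - v) / 2 ^ s) :=
    mul_le_mul_of_nonneg_left h2.le (by linarith)
  have h5 : (2 ^ s - 1) * (g + (g - v) / 2 ^ s) = 2 ^ s * g - v - (g - v) / 2 ^ s := by
    have : (2:ℝ) ^ s ≠ 0 := by positivity
    field_simp
    ring
  have h6 : 0 < (g - v) / 2 ^ s := div_pos (by linarith) (by positivity)
  linarith

end AUE

/-- Anti-uniformity estimate (Section 5.4, proof of Lemma 5.2 / Proposition 5.9): if `a`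
is bounded by `1` and admits correlations for Cesàro averages on intervals `I` with
`|I_N| → ∞`, if `(X_N, μ_N, T_N)` are probability measure-preserving systems (with `T_N`
invertible), `F_{0,N},…,F_{s-1,N}` measurable functions bounded by `1`, and
`k₀ = 0, k₁,…,k_{s-1} ∈ ℤ`, then
`limsup_N |𝔼_{n∈I_N} a(n) ∫ F_{0,N} ⋅ T_N^{k₁n}F_{1,N} ⋯ T_N^{k_{s-1}n}F_{s-1,N} dμ_N|
  ≤ 4 ‖a‖_{U^s(I)}`, where `u = ‖a‖_{U^s(I)}` is characterized by
`u^{2^s} = lim_H 𝔼_{h∈[H]^s} (lim_N 𝔼_{n∈I_N} ∏_ε C^{|ε|} a(n+ε·h))`. -/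
theorem anti_uniformity_estimate
    (lo hi : ℕ → ℕ) (I : ℕ → Finset ℕ)
    (hI : ∀ N, I N = Finset.Icc (lo N) (hi N))
    (hIcard : Tendsto (fun N => (I N).card) atTop atTop)
    (a : ℕ → ℂ) (ha : ∀ n, ‖a n‖ ≤ 1)
    (s : ℕ) (hs : 1 ≤ s)
    (hcorr : ∀ (k : ℕ) (sh : Fin k → ℕ) (cj : Fin k → Bool),
      ∃ L : ℂ, Tendsto (cesaroAvg I fun m => ∏ j,
        if cj j then (starRingEnd ℂ) (a (m + sh j)) else a (m + sh j)) atTop (𝓝 L))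
    (X : ℕ → Type) (mX : ∀ N, MeasurableSpace (X N))
    (μ : ∀ N, Measure (X N)) (hμ : ∀ N, IsProbabilityMeasure (μ N))
    (T : ∀ N, Equiv.Perm (X N))
    (hT : ∀ N, MeasurePreserving (T N) (μ N) (μ N))
    (hTmeas : ∀ N, Measurable ((T N).symm : X N → X N))
    (F : ∀ N, Fin s → X N → ℂ)
    (hFmeas : ∀ N i, Measurable (F N i))
    (hFbd : ∀ N i x, ‖F N i x‖ ≤ 1)
    (k : Fin s → ℤ) (hk0 : k ⟨0, hs⟩ = 0)
    (u : ℝ) (hu : 0 ≤ u)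
    (c : (Fin s → ℕ) → ℂ)
    (hc : ∀ h : Fin s → ℕ, Tendsto (cesaroAvg I (cubeProd a h)) atTop (𝓝 (c h)))
    (hlim : Tendsto (fun H : ℕ => ((H : ℂ) ^ s)⁻¹ *
        ∑ h ∈ Fintype.piFinset (fun _ : Fin s => Finset.Icc 1 H), c h) atTop
        (𝓝 ((u : ℂ) ^ (2 ^ s)))) :
    limsup (fun N : ℕ =>
      ‖((I N).card : ℂ)⁻¹ * ∑ n ∈ I N, a n *
          ∫ x, (∏ i, F N i (((T N) ^ (k i * (n : ℤ))) x)) ∂(μ N)‖) atTop ≤ 4 * u := by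
  classical
  obtain ⟨s, rfl⟩ := Nat.exists_eq_add_of_le' hs
  set x : ℕ → ℝ := fun N : ℕ =>
      ‖((I N).card : ℂ)⁻¹ * ∑ n ∈ I N, a n *
          ∫ x, (∏ i, F N i (((T N) ^ (k i * (n : ℤ))) x)) ∂(μ N)‖ with hx
  have hxW : ∀ N, x N = ‖AUE.W (μ N) (T N) (lo N) (I N).card a (F N) k‖ := by
    intro N
    simp only [hx, AUE.W]
    rw [hI N, AUE.sum_Icc_range]
  have hxb : ∀ N, x N ≤ 1 := fun N => by
    rw [hxW]
    exact AUE.W_bd _ _ _ _ _ ha (hFbd N)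
  have hx0 : ∀ N, 0 ≤ x N := fun N => norm_nonneg _
  by_contra hlt
  push Not at hlt
  obtain ⟨r, hr1, hr2⟩ := exists_between hlt
  have hfr : ∃ᶠ N in atTop, r < x N := frequently_lt_of_lt_limsup
    (Filter.IsBoundedUnder.isCoboundedUnder_le ⟨0, by simpa using ⟨0, fun N _ => hx0 N⟩⟩) hr2
  have hne : (atTop ⊓ 𝓟 {N | r < x N} : Filter ℕ).NeBot := frequently_mem_iff_neBot.1 hfr
  set U : Ultrafilter ℕ := Ultrafilter.of (atTop ⊓ 𝓟 {N | r < x N}) with hUdef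
  have hU' : (U : Filter ℕ) ≤ atTop ⊓ 𝓟 {N | r < x N} := Ultrafilter.of_le _
  have hU : (U : Filter ℕ) ≤ atTop := hU'.trans inf_le_left
  have hUr : ∀ᶠ N in (U : Filter ℕ), r < x N := (hU'.trans inf_le_right) (mem_principal_self _)
  obtain ⟨l, hl⟩ := AUE.ulim U (x := x) (C := 1) (fun N => by
    rw [abs_of_nonneg (hx0 N)]; exact hxb N)
  have hrl : r ≤ l := ge_of_tendsto hl (hUr.mono fun N h => h.le)
  have hm := AUE.um_isMean U hU lo hi I hI hIcard
  have hlW : Tendsto (fun N => ‖AUE.W (μ N) (T N) (lo N) (I N).card a (F N) k‖) U (𝓝 l) :=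
    hl.congr hxW
  have hclaim : ∀ L : ℕ, 1 ≤ L → l ^ (2 ^ (s + 1)) ≤ AUE.Q (AUE.um U I) (AUE.FA L) (s + 1) a :=
    fun L hL => AUE.claim hT hTmeas U hU lo hi I hI hIcard hL s a ha F hFmeas hFbd k l hlW
  have hv : Tendsto (fun H : ℕ => AUE.Q (AUE.um U I) (AUE.UA H) (s + 1) a) atTop
      (𝓝 (u ^ (2 ^ (s + 1)))) := by
    have h1 := (Complex.continuous_re.tendsto _).comp hlim
    have e : ((u : ℂ) ^ (2 ^ (s + 1))).re = u ^ (2 ^ (s + 1)) := by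
      rw [← Complex.ofReal_pow, Complex.ofReal_re]
    rw [e] at h1
    refine h1.congr fun H => ?_
    have e2 : ((H : ℂ) ^ (s + 1))⁻¹ = ((((H : ℝ) ^ (s + 1))⁻¹ : ℝ) : ℂ) := by push_cast; rfl
    simp only [Function.comp]
    rw [AUE.Q_UA_eq, e2, Complex.re_ofReal_mul, Complex.re_sum]
    congr 1
    exact Finset.sum_congr rfl fun h _ => (AUE.um_cube U hU I ha h (hc h)).symm
  have hfin : l ^ (2 ^ (s + 1)) ≤ u ^ (2 ^ (s + 1)) := AUE.final_bound hm ha (s + 1) hv hclaim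
  have hlu : l ≤ u := le_of_pow_le_pow_left₀ (by positivity) hu hfin
  linarith
end
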